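/- Let a > -1, b > 0 and δ > 0 be given. Then there exists ε_* > 0 such that for every ε ∈ (0, ε_*] and every normalised self-similar profile φ_ε for K_ε one has ∫₀^∞ |φ_ε(x) − e^{−x}| ω_{a,b}(x) dx ≤ δ. In particular, any two normalised self-similar profiles φ¹_ε and φ²_ε for K_ε with ε ≤ ε_* satisfy ∫₀^∞ |φ¹_ε(x) − φ²_ε(x)| ω_{a,b}(x) dx ≤ 2δ. -/

import Mathlib

open MeasureTheory Real Set Filter

noncomputable def weight (a b x : ℝ) : ℝ := if x ≤ 1 then x ^ a else x ^ b

noncomputable def Xnorm (a b : ℝ) (g : ℝ → ℝ) : ℝ :=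
  ∫ x in Ioi (0:ℝ), |g x| * weight a b x

def MemX (a b : ℝ) (g : ℝ → ℝ) : Prop :=
  IntegrableOn (fun x => g x * weight a b x) (Ioi 0)

noncomputable def Kern (ε : ℝ) (W : ℝ → ℝ → ℝ) (x y : ℝ) : ℝ := 2 + ε * W x y

def GoodW (α : ℝ) (W : ℝ → ℝ → ℝ) : Prop :=
  ContinuousOn (fun p : ℝ × ℝ => W p.1 p.2) (Ioi 0 ×ˢ Ioi 0) ∧
  (∀ x y : ℝ, 0 < x → 0 < y → W x y = W y x) ∧
  (∀ l x y : ℝ, 0 < l → 0 < x → 0 < y → W (l * x) (l * y) = W x y) ∧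
  (∀ x y : ℝ, 0 < x → 0 < y → 0 ≤ W x y ∧ W x y ≤ (x / y) ^ α + (y / x) ^ α)

def IsProfile (K : ℝ → ℝ → ℝ) (φ : ℝ → ℝ) : Prop :=
  LocallyIntegrableOn φ (Ioi 0) ∧
  (∀ᵐ x ∂(volume.restrict (Ioi (0:ℝ))), 0 ≤ φ x) ∧
  IntegrableOn (fun x => x * φ x) (Ioi 0) ∧
  (∀ᵐ x ∂(volume.restrict (Ioi (0:ℝ))),
    x ^ 2 * φ x = ∫ y in Ioo 0 x, ∫ z in Ioi (x - y), y * K y z * φ y * φ z)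

def IsNormalised (φ : ℝ → ℝ) : Prop := ∫ x in Ioi (0:ℝ), x * φ x = 1

open scoped ENNReal Topology

/-- the measure with density `f` on the positive half line -/
noncomputable def BM (f : ℝ → ℝ≥0∞) : Measure ℝ := (volume.restrict (Ioi (0:ℝ))).withDensity f

/-- the region integral -/
noncomputable def Reg (f : ℝ → ℝ≥0∞) (k : ℝ → ℝ → ℝ≥0∞) (x : ℝ) : ℝ≥0∞ :=
  ∫⁻ y, ∫⁻ z, (Ioo y (y+z)).indicator (fun _ => ENNReal.ofReal y * k y z) x ∂(BM f) ∂(BM f)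

instance BM_sfinite (f : ℝ → ℝ≥0∞) : SFinite (BM f) := by unfold BM; infer_instance

lemma BM_pos {f : ℝ → ℝ≥0∞} : ∀ᵐ x ∂(BM f), 0 < x := by
  have h : ∀ᵐ x ∂(volume.restrict (Ioi (0:ℝ))), 0 < x := ae_restrict_mem measurableSet_Ioi
  exact (withDensity_absolutelyContinuous _ f).ae_le h

lemma BM_lintegral {f : ℝ → ℝ≥0∞} (hf : Measurable f) {g : ℝ → ℝ≥0∞} (hg : Measurable g) :
    ∫⁻ x, g x ∂(BM f) = ∫⁻ x in Ioi (0:ℝ), f x * g x := by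
  unfold BM
  rw [lintegral_withDensity_eq_lintegral_mul _ hf hg]; rfl

lemma meas_ind {k : ℝ → ℝ → ℝ≥0∞} (hk : Measurable (fun p : ℝ × ℝ => k p.1 p.2)) :
    Measurable (fun q : ℝ × ℝ × ℝ => (Ioo q.2.1 (q.2.1+q.2.2)).indicator
      (fun _ => ENNReal.ofReal q.2.1 * k q.2.1 q.2.2) q.1) := by
  have : (fun q : ℝ × ℝ × ℝ => (Ioo q.2.1 (q.2.1+q.2.2)).indicator
      (fun _ => ENNReal.ofReal q.2.1 * k q.2.1 q.2.2) q.1) =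
      ({q : ℝ × ℝ × ℝ | q.2.1 < q.1} ∩ {q : ℝ × ℝ × ℝ | q.1 < q.2.1 + q.2.2}).indicator
      (fun q => ENNReal.ofReal q.2.1 * k q.2.1 q.2.2) := by
    ext q; simp [indicator, mem_Ioo]
  rw [this]
  refine Measurable.indicator ?_ ?_
  · have := hk.comp (measurable_snd : Measurable (fun q : ℝ × ℝ × ℝ => q.2))
    exact (ENNReal.measurable_ofReal.comp (measurable_fst.comp measurable_snd)).mul this
  · refine (measurableSet_lt (by fun_prop) (by fun_prop)).inter (measurableSet_lt (by fun_prop) (by fun_prop))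

lemma meas_Reg {f : ℝ → ℝ≥0∞} {k : ℝ → ℝ → ℝ≥0∞} (hk : Measurable (fun p : ℝ × ℝ => k p.1 p.2)) :
    Measurable (Reg f k) := by
  unfold Reg
  have h := meas_ind hk
  have h1 : Measurable (fun q : (ℝ × ℝ) × ℝ => (Ioo q.1.2 (q.1.2+q.2)).indicator
      (fun _ => ENNReal.ofReal q.1.2 * k q.1.2 q.2) q.1.1) :=
    h.comp (MeasurableEquiv.prodAssoc.measurable)
  have h2 : Measurable (fun q : ℝ × ℝ => ∫⁻ z, (Ioo q.2 (q.2+z)).indicator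
      (fun _ => ENNReal.ofReal q.2 * k q.2 z) q.1 ∂(BM f)) := h1.lintegral_prod_right'
  exact h2.lintegral_prod_right'

/-- Tonelli for the region integral -/
lemma Reg_test {f : ℝ → ℝ≥0∞} {k : ℝ → ℝ → ℝ≥0∞}
    (hk : Measurable (fun p : ℝ × ℝ => k p.1 p.2)) {h : ℝ → ℝ≥0∞} (hh : Measurable h) :
    ∫⁻ x in Ioi (0:ℝ), h x * Reg f k x =
      ∫⁻ y, ∫⁻ z, ENNReal.ofReal y * k y z * (∫⁻ x in Ioo y (y+z), h x) ∂(BM f) ∂(BM f) := by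
  have h0 := meas_ind hk
  have h1 : Measurable (fun q : (ℝ × ℝ) × ℝ => (Ioo q.1.2 (q.1.2+q.2)).indicator
      (fun _ => ENNReal.ofReal q.1.2 * k q.1.2 q.2) q.1.1) :=
    h0.comp (MeasurableEquiv.prodAssoc.measurable)
  have h2 : Measurable (fun q : ℝ × ℝ => ∫⁻ z, (Ioo q.2 (q.2+z)).indicator
      (fun _ => ENNReal.ofReal q.2 * k q.2 z) q.1 ∂(BM f)) := h1.lintegral_prod_right'
  unfold Reg
  calc ∫⁻ x in Ioi (0:ℝ), h x * ∫⁻ y, ∫⁻ z, (Ioo y (y+z)).indicator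
          (fun _ => ENNReal.ofReal y * k y z) x ∂(BM f) ∂(BM f)
      = ∫⁻ x in Ioi (0:ℝ), ∫⁻ y, h x * ∫⁻ z, (Ioo y (y+z)).indicator
          (fun _ => ENNReal.ofReal y * k y z) x ∂(BM f) ∂(BM f) := by
        refine lintegral_congr fun x => ?_
        rw [lintegral_const_mul]
        exact h2.comp (measurable_const.prodMk measurable_id)
    _ = ∫⁻ y, ∫⁻ x in Ioi (0:ℝ), h x * ∫⁻ z, (Ioo y (y+z)).indicator
          (fun _ => ENNReal.ofReal y * k y z) x ∂(BM f) ∂volume ∂(BM f) := by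
        rw [lintegral_lintegral_swap]
        exact ((hh.comp measurable_fst).mul h2).aemeasurable
    _ = ∫⁻ y, ∫⁻ x in Ioi (0:ℝ), ∫⁻ z, h x * (Ioo y (y+z)).indicator
          (fun _ => ENNReal.ofReal y * k y z) x ∂(BM f) ∂volume ∂(BM f) := by
        refine lintegral_congr fun y => lintegral_congr fun x => ?_
        rw [lintegral_const_mul]
        exact h1.comp ((measurable_const (a := (x, y))).prodMk measurable_id)
    _ = ∫⁻ y, ∫⁻ z, ∫⁻ x in Ioi (0:ℝ), h x * (Ioo y (y+z)).indicator
          (fun _ => ENNReal.ofReal y * k y z) x ∂volume ∂(BM f) ∂(BM f) := by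
        refine lintegral_congr fun y => ?_
        rw [lintegral_lintegral_swap]
        refine ((hh.comp measurable_fst).mul ?_).aemeasurable
        exact h0.comp (measurable_fst.prodMk (measurable_const.prodMk measurable_snd))
    _ = _ := by
        refine lintegral_congr_ae ?_
        filter_upwards [BM_pos (f := f)] with y hy
        refine lintegral_congr fun z => ?_
        have : ∀ x, h x * (Ioo y (y+z)).indicator (fun _ => ENNReal.ofReal y * k y z) x =
            (Ioo y (y+z)).indicator (fun x => ENNReal.ofReal y * k y z * h x) x := by
          intro x; by_cases hx : x ∈ Ioo y (y+z) <;> simp [hx, mul_comm]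
        simp_rw [this]
        rw [lintegral_indicator measurableSet_Ioo, Measure.restrict_restrict measurableSet_Ioo,
          lintegral_const_mul _ hh]
        congr 3
        ext x; simp; intro h _; linarith

structure Prof (α ε : ℝ) (w : ℝ → ℝ → ℝ≥0∞) (f : ℝ → ℝ≥0∞) : Prop where
  hα : α ∈ Ioo (0:ℝ) 1
  hε : 0 < ε
  hε1 : ε ≤ 1
  mf : Measurable f
  mw : Measurable (fun p : ℝ × ℝ => w p.1 p.2)
  symm : ∀ y z, w y z = w z y
  bd : ∀ y z, 0 < y → 0 < z → w y z ≤ ENNReal.ofReal ((y/z)^α + (z/y)^α)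
  mass : ∫⁻ x, ENNReal.ofReal x ∂(BM f) = 1
  eq : ∀ᵐ x ∂(volume.restrict (Ioi (0:ℝ))),
    ENNReal.ofReal (x^2) * f x = Reg f (fun y z => 2 + ENNReal.ofReal ε * w y z) x

lemma Prof.mk' {α ε : ℝ} {w : ℝ → ℝ → ℝ≥0∞} {f : ℝ → ℝ≥0∞} (H : Prof α ε w f) :
    Measurable (fun p : ℝ × ℝ => 2 + ENNReal.ofReal ε * w p.1 p.2) :=
  (H.mw.const_mul _).const_add _

lemma Prof.master {α ε : ℝ} {w : ℝ → ℝ → ℝ≥0∞} {f : ℝ → ℝ≥0∞} (H : Prof α ε w f)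
    {h : ℝ → ℝ≥0∞} (hh : Measurable h) :
    ∫⁻ x, ENNReal.ofReal (x^2) * h x ∂(BM f) =
      ∫⁻ y, ∫⁻ z, ENNReal.ofReal y * (2 + ENNReal.ofReal ε * w y z) *
        (∫⁻ x in Ioo y (y+z), h x) ∂(BM f) ∂(BM f) := by
  rw [← Reg_test (k := fun y z => 2 + ENNReal.ofReal ε * w y z) H.mk' hh, BM_lintegral H.mf (by fun_prop)]
  refine lintegral_congr_ae ?_
  filter_upwards [H.eq] with x hx
  rw [← hx]; ring

lemma kern_bd {α : ℝ} (hα : α ∈ Ioo (0:ℝ) 1) {k : ℝ → ℝ → ℝ≥0∞}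
    (kb : ∀ y z, 0 < y → 0 < z → k y z ≤ ENNReal.ofReal (2 + (y/z)^α + (z/y)^α))
    {r R : ℝ} (hr : 0 < r) :
    ∃ C : ℝ, 0 ≤ C ∧ ∀ y z, r ≤ y → y ≤ R → r ≤ z → k y z ≤ ENNReal.ofReal (C * z) := by
  refine ⟨(4 + |R|/r)/r + 1/r, by positivity, fun y z hy hyR hz => ?_⟩
  have hy0 : 0 < y := by linarith
  have hz0 : 0 < z := by linarith
  refine (kb y z hy0 hz0).trans (ENNReal.ofReal_le_ofReal ?_)
  have key : ∀ t : ℝ, 0 < t → t^α ≤ 1 + t := by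
    intro t ht
    rcases le_total t 1 with h | h
    · have := Real.rpow_le_one ht.le h hα.1.le
      linarith
    · have := Real.rpow_le_rpow_of_exponent_le h hα.2.le
      rw [Real.rpow_one] at this; linarith
  have h1 := key (y/z) (by positivity)
  have h2 := key (z/y) (by positivity)
  have h3 : y/z ≤ |R|/r := div_le_div₀ (abs_nonneg _) (hyR.trans (le_abs_self R)) hr hz
  have h4 : z/y ≤ z/r := div_le_div_of_nonneg_left hz0.le hr hy
  have h5 : (4 + |R|/r) ≤ (4 + |R|/r)/r * z := by
    rw [div_mul_eq_mul_div, le_div_iff₀ hr]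
    exact mul_le_mul_of_nonneg_left hz (by positivity)
  have : z / r = 1/r*z := by ring
  linarith

lemma lint_prod_mass {f : ℝ → ℝ≥0∞} (mass : ∫⁻ x, ENNReal.ofReal x ∂(BM f) = 1) (C : ℝ≥0∞) :
    ∫⁻ y, ∫⁻ z, C * (ENNReal.ofReal y * ENNReal.ofReal z) ∂(BM f) ∂(BM f) = C := by
  have : ∀ y : ℝ, ∫⁻ z, C * (ENNReal.ofReal y * ENNReal.ofReal z) ∂(BM f) = C * ENNReal.ofReal y := by
    intro y
    rw [lintegral_const_mul _ (by fun_prop), lintegral_const_mul _ (by fun_prop), mass, mul_one]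
  simp_rw [this]
  rw [lintegral_const_mul _ (by fun_prop), mass, mul_one]

noncomputable def GG (f : ℝ → ℝ≥0∞) (k : ℝ → ℝ → ℝ≥0∞) (c : ℝ) : ℝ≥0∞ :=
  ∫⁻ y, ∫⁻ z, (if y < c ∧ c < z then ENNReal.ofReal y * k y z else 0) ∂(BM f) ∂(BM f)

lemma meas_GG {k : ℝ → ℝ → ℝ≥0∞} (mk : Measurable (fun p : ℝ × ℝ => k p.1 p.2)) (c : ℝ) :
    Measurable (fun p : ℝ × ℝ => if p.1 < c ∧ c < p.2 then ENNReal.ofReal p.1 * k p.1 p.2 else 0) := by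
  refine Measurable.ite ?_ ?_ measurable_const
  · exact (measurableSet_lt measurable_fst measurable_const).inter
      (measurableSet_lt measurable_const measurable_snd)
  · exact (ENNReal.measurable_ofReal.comp measurable_fst).mul mk

lemma GG_finite {α : ℝ} (hα : α ∈ Ioo (0:ℝ) 1) {f : ℝ → ℝ≥0∞} {k : ℝ → ℝ → ℝ≥0∞}
    (mf : Measurable f)
    (mk : Measurable (fun p : ℝ × ℝ => k p.1 p.2))
    (kb : ∀ y z, 0 < y → 0 < z → k y z ≤ ENNReal.ofReal (2 + (y/z)^α + (z/y)^α))
    (mass : ∫⁻ x, ENNReal.ofReal x ∂(BM f) = 1)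
    (hz : ∀ᵐ x ∂(volume.restrict (Ioi (0:ℝ))), Reg f k x = ∞ → f x = 0)
    {c : ℝ} (_hc : 0 < c) : GG f k c ≠ ∞ := by
  intro hG
  have hR : ∀ x, 0 < x → x < c → Reg f k x = ∞ := by
    intro x hx hxc
    obtain ⟨C, hC, hk⟩ := kern_bd (R := c) hα kb hx
    have : GG f k c ≤ Reg f k x + ENNReal.ofReal C := by
      rw [← lint_prod_mass mass (ENNReal.ofReal C)]
      unfold GG Reg
      rw [← lintegral_add_right]
      swap
      · simp_rw [← mul_assoc]
        simp_rw [fun y : ℝ => lintegral_const_mul (μ := BM f) (ENNReal.ofReal C * ENNReal.ofReal y) ENNReal.measurable_ofReal]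
        fun_prop
      refine lintegral_mono_ae ?_
      filter_upwards [BM_pos (f := f)] with y hy
      rw [← lintegral_add_right _ (by fun_prop)]
      refine lintegral_mono_ae ?_
      filter_upwards [BM_pos (f := f)] with z hz
      split_ifs with h
      · rcases lt_or_ge y x with hyx | hyx
        · have : x ∈ Ioo y (y+z) := ⟨hyx, by linarith [h.2]⟩
          rw [indicator_of_mem this]
          exact le_self_add
        · refine le_trans ?_ le_add_self
          calc ENNReal.ofReal y * k y z ≤ ENNReal.ofReal y * ENNReal.ofReal (C * z) := by
                gcongr; exact hk y z hyx h.1.le (by linarith [h.2])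
            _ = _ := by rw [ENNReal.ofReal_mul hC]; ring
      · exact zero_le
    rw [hG] at this
    by_contra hne
    exact absurd (top_le_iff.1 this) (ENNReal.add_ne_top.2 ⟨hne, ENNReal.ofReal_ne_top⟩)
  have hB : ∀ᵐ y ∂(BM f), ¬ y < c := by
    rw [ae_iff]
    unfold BM
    simp only [not_not]
    have hms : MeasurableSet {a : ℝ | a < c} := measurableSet_lt measurable_id measurable_const
    rw [withDensity_apply _ hms]
    rw [lintegral_eq_zero_iff mf]
    refine (ae_restrict_iff' hms).2 ?_
    filter_upwards [hz, ae_restrict_mem measurableSet_Ioi] with x h1 h2 h3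
    exact h1 (hR x h2 h3)
  have : GG f k c = 0 := by
    unfold GG
    rw [lintegral_eq_zero_iff' (meas_GG mk c).lintegral_prod_right'.aemeasurable]
    filter_upwards [hB] with y hy
    simp [hy]
  rw [this] at hG
  exact ENNReal.zero_ne_top hG

lemma Reg_finite {α : ℝ} (hα : α ∈ Ioo (0:ℝ) 1) {f : ℝ → ℝ≥0∞} {k : ℝ → ℝ → ℝ≥0∞}
    (mf : Measurable f)
    (mk : Measurable (fun p : ℝ × ℝ => k p.1 p.2)) (ks : ∀ y z, k y z = k z y)
    (kb : ∀ y z, 0 < y → 0 < z → k y z ≤ ENNReal.ofReal (2 + (y/z)^α + (z/y)^α))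
    (mass : ∫⁻ x, ENNReal.ofReal x ∂(BM f) = 1)
    (hz : ∀ᵐ x ∂(volume.restrict (Ioi (0:ℝ))), Reg f k x = ∞ → f x = 0) :
    ∀ᵐ x ∂(volume.restrict (Ioi (0:ℝ))), Reg f k x < ∞ := by
  have main : ∀ r R : ℝ, 0 < r → ∀ᵐ x ∂(volume.restrict (Ioo r R)), Reg f k x < ∞ := by
    intro r R hr
    have hmeas : Measurable ((Ioo r R).indicator (fun _ => (1:ℝ≥0∞))) :=
      measurable_const.indicator measurableSet_Ioo
    have ht := Reg_test (f := f) mk hmeas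
    have hL : ∫⁻ x in Ioo r R, Reg f k x ≤ ∫⁻ x in Ioi (0:ℝ), (Ioo r R).indicator (fun _ => (1:ℝ≥0∞)) x * Reg f k x := by
      rw [← lintegral_indicator measurableSet_Ioo, ← lintegral_indicator measurableSet_Ioi]
      refine lintegral_mono fun x => ?_
      by_cases hx : x ∈ Ioo r R
      · have : x ∈ Ioi (0:ℝ) := by simp; linarith [hx.1]
        simp [hx, this]
      · simp [hx]
    refine ae_lt_top (meas_Reg mk) (ne_of_lt (hL.trans_lt ?_))
    rw [ht]
    set c := r/2 with hc
    have hc0 : 0 < c := by positivity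
    obtain ⟨C, hC, hk⟩ := kern_bd (R := R) hα kb hc0
    have hGsw : GG f k c = ∫⁻ y, ∫⁻ z, (if z < c ∧ c < y then ENNReal.ofReal z * k y z else 0) ∂(BM f) ∂(BM f) := by
      unfold GG
      rw [lintegral_lintegral_swap (meas_GG mk c).aemeasurable]
      simp_rw [ks]
    have hmG := meas_GG mk c
    have hmG2 : Measurable (fun p : ℝ × ℝ => if p.2 < c ∧ c < p.1 then ENNReal.ofReal p.2 * k p.1 p.2 else 0) := by
      have h0 := hmG.comp (measurable_swap (α := ℝ) (β := ℝ))
      convert h0 using 2 with p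
      simp [ks p.1 p.2]
    have hfin : ENNReal.ofReal (C * (R - r)) + ENNReal.ofReal R * GG f k c + ENNReal.ofReal R * GG f k c < ∞ := by
      have := GG_finite hα mf mk kb mass hz hc0
      have h2 : ENNReal.ofReal R * GG f k c ≠ ∞ := ENNReal.mul_ne_top ENNReal.ofReal_ne_top this
      exact ENNReal.add_lt_top.2 ⟨ENNReal.add_lt_top.2 ⟨ENNReal.ofReal_lt_top, h2.lt_top⟩, h2.lt_top⟩
    refine lt_of_le_of_lt ?_ hfin
    have e1 := lint_prod_mass mass (ENNReal.ofReal (C * (R-r)))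
    nth_rewrite 2 [hGsw]
    unfold GG
    rw [← e1, ← lintegral_const_mul _ hmG.lintegral_prod_right', ← lintegral_const_mul _ hmG2.lintegral_prod_right']
    rw [← lintegral_add_right _ (hmG.lintegral_prod_right'.const_mul _), ← lintegral_add_right _ (hmG2.lintegral_prod_right'.const_mul _)]
    refine lintegral_mono_ae ?_
    filter_upwards [BM_pos (f := f)] with y hy
    have hm1 : Measurable fun z => if y < c ∧ c < z then ENNReal.ofReal y * k y z else 0 :=
      hmG.comp ((measurable_const (a := y)).prodMk measurable_id)
    have hm2 : Measurable fun z => if z < c ∧ c < y then ENNReal.ofReal z * k y z else 0 :=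
      hmG2.comp ((measurable_const (a := y)).prodMk measurable_id)
    rw [← lintegral_const_mul _ hm1, ← lintegral_const_mul _ hm2, ← lintegral_add_right _ (hm1.const_mul _),
      ← lintegral_add_right _ (hm2.const_mul _)]
    refine lintegral_mono_ae ?_
    filter_upwards [BM_pos (f := f)] with z hz
    rw [lintegral_indicator measurableSet_Ioo, Measure.restrict_restrict measurableSet_Ioo]
    simp only [lintegral_const, Measure.restrict_apply MeasurableSet.univ, univ_inter, one_mul]
    by_cases hne : (Ioo r R ∩ Ioo y (y+z)).Nonempty
    swap
    · rw [not_nonempty_iff_eq_empty] at hne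
      simp [hne]
    obtain ⟨x, ⟨hx1, hx2⟩, hx3, hx4⟩ := hne
    have hR0 : 0 < R := by linarith
    have hl1 : volume (Ioo r R ∩ Ioo y (y+z)) ≤ ENNReal.ofReal (R - r) := by
      refine (measure_mono inter_subset_left).trans ?_
      rw [Real.volume_Ioo]
    have hl1' : volume (Ioo r R ∩ Ioo y (y+z)) ≤ ENNReal.ofReal R :=
      hl1.trans (ENNReal.ofReal_le_ofReal (by linarith))
    have hl2 : volume (Ioo r R ∩ Ioo y (y+z)) ≤ ENNReal.ofReal z := by
      refine (measure_mono inter_subset_right).trans ?_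
      rw [Real.volume_Ioo]; simp
    rcases lt_or_ge y c with h | h
    · have : y < c ∧ c < z := ⟨h, by linarith⟩
      rw [if_pos this]
      refine le_trans ?_ (le_trans le_add_self le_self_add)
      rw [mul_comm]; gcongr
    rcases lt_or_ge z c with h' | h'
    · have : z < c ∧ c < y := ⟨h', by linarith⟩
      rw [if_pos this]
      refine le_trans ?_ le_add_self
      calc ENNReal.ofReal y * k y z * volume (Ioo r R ∩ Ioo y (y+z)) ≤ ENNReal.ofReal R * k y z * ENNReal.ofReal z := by
            gcongr; linarith
        _ = _ := by ring
    · refine le_trans ?_ (le_trans le_self_add le_self_add)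
      calc ENNReal.ofReal y * k y z * volume (Ioo r R ∩ Ioo y (y+z)) ≤
            ENNReal.ofReal y * ENNReal.ofReal (C * z) * ENNReal.ofReal (R - r) := by
            gcongr; exact hk y z h (by linarith) h'
        _ = _ := by
            rw [ENNReal.ofReal_mul hC, ENNReal.ofReal_mul hC]; ring
  have hU : Ioi (0:ℝ) = ⋃ n : ℕ, Ioo (1/((n:ℝ)+1)) (n:ℝ) := by
    ext x
    simp only [mem_Ioi, mem_iUnion, mem_Ioo]
    constructor
    · intro hx
      obtain ⟨n, hn⟩ := exists_nat_gt (max x (1/x))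
      refine ⟨n, ?_, (le_max_left _ _).trans_lt hn⟩
      have := (le_max_right _ _).trans_lt hn
      rw [div_lt_iff₀ (by positivity)]
      rw [div_lt_iff₀ hx] at this
      nlinarith
    · rintro ⟨n, h1, h2⟩
      exact lt_trans (by positivity) h1
  rw [hU, ae_restrict_iUnion_iff]
  intro n
  exact main _ _ (by positivity)

lemma Reg_eq {f : ℝ → ℝ≥0∞} {k : ℝ → ℝ → ℝ≥0∞} (mf : Measurable f)
    (mk : Measurable (fun p : ℝ × ℝ => k p.1 p.2)) (x : ℝ) :
    Reg f k x = ∫⁻ y in Ioo 0 x, f y * ∫⁻ z in Ioi (x-y), f z * (ENNReal.ofReal y * k y z) := by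
  have h0 := meas_ind mk
  have h1 : Measurable (fun q : (ℝ × ℝ) × ℝ => (Ioo q.1.2 (q.1.2+q.2)).indicator
      (fun _ => ENNReal.ofReal q.1.2 * k q.1.2 q.2) q.1.1) :=
    h0.comp (MeasurableEquiv.prodAssoc.measurable)
  have h2 : Measurable (fun q : ℝ × ℝ => ∫⁻ z, (Ioo q.2 (q.2+z)).indicator
      (fun _ => ENNReal.ofReal q.2 * k q.2 z) q.1 ∂(BM f)) := h1.lintegral_prod_right'
  unfold Reg
  have h3 : Measurable (fun y => ∫⁻ z, (Ioo y (y+z)).indicator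
      (fun _ => ENNReal.ofReal y * k y z) x ∂(BM f)) :=
    h2.comp ((measurable_const (a := x)).prodMk measurable_id)
  rw [BM_lintegral mf h3,
    ← lintegral_indicator measurableSet_Ioi, ← lintegral_indicator measurableSet_Ioo]
  refine lintegral_congr fun y => ?_
  by_cases hy : 0 < y
  swap
  · have : y ∉ Ioo 0 x := fun h => hy h.1
    simp [this, hy]
  rw [indicator_of_mem (show y ∈ Ioi (0:ℝ) from hy)]
  by_cases hx : y < x
  swap
  · have h3 : y ∉ Ioo 0 x := fun h => hx h.2
    have : ∀ z, x ∉ Ioo y (y+z) := fun z h => hx h.1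
    simp [h3, this]
  rw [indicator_of_mem (show y ∈ Ioo (0:ℝ) x from ⟨hy, hx⟩)]
  congr 1
  have h4 : Measurable (fun z => (Ioo y (y+z)).indicator
      (fun _ => ENNReal.ofReal y * k y z) x) :=
    h1.comp ((measurable_const (a := (x,y))).prodMk measurable_id)
  rw [BM_lintegral mf h4,
    ← lintegral_indicator measurableSet_Ioi, ← lintegral_indicator measurableSet_Ioi]
  refine lintegral_congr fun z => ?_
  by_cases hz : x - y < z
  · have a1 : z ∈ Ioi (x-y) := hz
    have a2 : z ∈ Ioi (0:ℝ) := by simp; linarith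
    have a3 : x ∈ Ioo y (y+z) := ⟨hx, by linarith⟩
    simp only [indicator_of_mem, a1, a2, a3]
  · have a1 : z ∉ Ioi (x-y) := hz
    have a3 : x ∉ Ioo y (y+z) := fun h => hz (by linarith [h.2])
    simp [indicator_of_notMem a1, indicator_of_notMem a3]

lemma exists_prof {α : ℝ} (hα : α ∈ Ioo (0:ℝ) 1) {W : ℝ → ℝ → ℝ} (hW : GoodW α W)
    {ε : ℝ} (hε : 0 < ε) (hε1 : ε ≤ 1) {φ : ℝ → ℝ} (hφ : IsProfile (Kern ε W) φ)
    (hn : IsNormalised φ) :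
    ∃ w f, Prof α ε w f ∧ (∀ x, f x ≠ ∞) ∧
      ∀ᵐ x ∂(volume.restrict (Ioi (0:ℝ))), φ x = (f x).toReal := by
  obtain ⟨hloc, hpos, hIntg, heq⟩ := hφ
  obtain ⟨hc, hs, -, hb⟩ := hW
  have haem : AEMeasurable φ (volume.restrict (Ioi (0:ℝ))) :=
    (hloc.aestronglyMeasurable).aemeasurable
  set f : ℝ → ℝ≥0∞ := fun x => ENNReal.ofReal (haem.mk φ x) with hf
  set w : ℝ → ℝ → ℝ≥0∞ := fun y z => if 0 < y ∧ 0 < z then ENNReal.ofReal (W y z) else 0 with hw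
  have mf : Measurable f := ENNReal.measurable_ofReal.comp haem.measurable_mk
  have mw : Measurable (fun p : ℝ × ℝ => w p.1 p.2) := by
    have h1 : Measurable ((Ioi (0:ℝ) ×ˢ Ioi (0:ℝ)).piecewise (fun p : ℝ × ℝ => W p.1 p.2) (fun _ => 0)) := by
      classical
      exact hc.measurable_piecewise continuousOn_const (measurableSet_Ioi.prod measurableSet_Ioi)
    have h2 := ENNReal.measurable_ofReal.comp h1
    convert h2 using 2 with p
    simp only [hw, Function.comp, piecewise, mem_prod, mem_Ioi]
    split_ifs <;> simp
  set k : ℝ → ℝ → ℝ≥0∞ := fun y z => 2 + ENNReal.ofReal ε * w y z with hk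
  have mk : Measurable (fun p : ℝ × ℝ => k p.1 p.2) := (mw.const_mul _).const_add _
  have ws : ∀ y z, w y z = w z y := by
    intro y z
    simp only [hw]
    by_cases h : 0 < y ∧ 0 < z
    · rw [if_pos h, if_pos h.symm, hs y z h.1 h.2]
    · rw [if_neg h, if_neg (fun h' => h h'.symm)]
  have wb : ∀ y z, 0 < y → 0 < z → w y z ≤ ENNReal.ofReal ((y/z)^α + (z/y)^α) := by
    intro y z hy hz
    simp only [hw]
    rw [if_pos ⟨hy, hz⟩]
    exact ENNReal.ofReal_le_ofReal (hb y z hy hz).2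
  have kb : ∀ y z, 0 < y → 0 < z → k y z ≤ ENNReal.ofReal (2 + (y/z)^α + (z/y)^α) := by
    intro y z hy hz
    have h1 : ENNReal.ofReal ε ≤ 1 := by rw [← ENNReal.ofReal_one]; exact ENNReal.ofReal_le_ofReal hε1
    calc k y z ≤ 2 + 1 * ENNReal.ofReal ((y/z)^α + (z/y)^α) := by
          simp only [hk]; gcongr; exact wb y z hy hz
      _ = ENNReal.ofReal 2 + ENNReal.ofReal ((y/z)^α + (z/y)^α) := by simp
      _ = _ := by rw [← ENNReal.ofReal_add (by norm_num) (by positivity), add_assoc]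
  have hfe : ∀ᵐ x ∂(volume.restrict (Ioi (0:ℝ))), φ x = (f x).toReal := by
    filter_upwards [haem.ae_eq_mk, hpos] with x h1 h2
    simp only [hf]
    rw [← h1, ENNReal.toReal_ofReal h2]
  have hft : ∀ x, f x ≠ ∞ := fun x => ENNReal.ofReal_ne_top
  have mass : ∫⁻ x, ENNReal.ofReal x ∂(BM f) = 1 := by
    rw [BM_lintegral mf ENNReal.measurable_ofReal]
    have h1 : ∫⁻ x in Ioi (0:ℝ), f x * ENNReal.ofReal x = ∫⁻ x in Ioi (0:ℝ), ENNReal.ofReal (x * φ x) := by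
      refine lintegral_congr_ae ?_
      filter_upwards [hfe, ae_restrict_mem measurableSet_Ioi] with x h1 h2
      rw [ENNReal.ofReal_mul (le_of_lt h2), h1, ENNReal.ofReal_toReal (hft x), mul_comm]
    rw [h1, ← ofReal_integral_eq_lintegral_ofReal hIntg]
    · unfold IsNormalised at hn; rw [hn]; simp
    · filter_upwards [hpos, ae_restrict_mem measurableSet_Ioi] with x h1 h2
      exact mul_nonneg (le_of_lt h2) h1
  have hmm : ∀ x : ℝ, 0 < x → ∀ y ∈ Ioo 0 x, ∫⁻ z in Ioi (x-y), f z * (ENNReal.ofReal y * k y z) ≠ ∞ := by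
    intro x hx y hy
    have hr : 0 < min y (x-y) := lt_min hy.1 (by linarith [hy.2])
    obtain ⟨C, hC, hkk⟩ := kern_bd (R := y) hα kb hr
    refine ne_of_lt (lt_of_le_of_lt (b := ENNReal.ofReal (y * C)) ?_ ENNReal.ofReal_lt_top)
    calc ∫⁻ z in Ioi (x-y), f z * (ENNReal.ofReal y * k y z) ≤
          ∫⁻ z in Ioi (x-y), ENNReal.ofReal (y*C) * (f z * ENNReal.ofReal z) := by
          refine lintegral_mono_ae ?_
          filter_upwards [ae_restrict_mem measurableSet_Ioi] with z hz
          have hz' : x - y < z := hz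
          calc f z * (ENNReal.ofReal y * k y z) ≤ f z * (ENNReal.ofReal y * ENNReal.ofReal (C * z)) := by
                gcongr; exact hkk y z (min_le_left _ _) le_rfl ((min_le_right _ _).trans hz'.le)
            _ = _ := by rw [ENNReal.ofReal_mul hC, ENNReal.ofReal_mul hy.1.le]; ring
      _ ≤ ∫⁻ z in Ioi 0, ENNReal.ofReal (y*C) * (f z * ENNReal.ofReal z) :=
          lintegral_mono_set (Ioi_subset_Ioi (by linarith [hy.2]))
      _ = ENNReal.ofReal (y*C) := by
          rw [lintegral_const_mul _ (by fun_prop), ← BM_lintegral mf ENNReal.measurable_ofReal, mass, mul_one]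
  have hReg : ∀ᵐ x ∂(volume.restrict (Ioi (0:ℝ))), x^2 * φ x = (Reg f k x).toReal := by
    filter_upwards [heq, ae_restrict_mem measurableSet_Ioi] with x hx hx0
    have hx0 : 0 < x := hx0
    rw [hx, Reg_eq mf mk]
    have mJ : Measurable (fun y => f y * ∫⁻ z in Ioi (x-y), f z * (ENNReal.ofReal y * k y z)) := by
      refine mf.mul ?_
      have : ∀ y, ∫⁻ z in Ioi (x-y), f z * (ENNReal.ofReal y * k y z) =
          ∫⁻ z, {p : ℝ × ℝ | x - p.1 < p.2}.indicator (fun p => f p.2 * (ENNReal.ofReal p.1 * k p.1 p.2)) (y, z) := by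
        intro y
        rw [← lintegral_indicator measurableSet_Ioi]
        rfl
      simp_rw [this]
      refine Measurable.lintegral_prod_right' (f := fun q : ℝ × ℝ => {p : ℝ × ℝ | x - p.1 < p.2}.indicator (fun p => f p.2 * (ENNReal.ofReal p.1 * k p.1 p.2)) q) ?_
      refine Measurable.indicator ?_ (measurableSet_lt (by fun_prop) (by fun_prop))
      exact (mf.comp measurable_snd).mul ((ENNReal.measurable_ofReal.comp measurable_fst).mul mk)
    rw [← integral_toReal mJ.aemeasurable]
    swap
    · filter_upwards [ae_restrict_mem measurableSet_Ioo] with y hy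
      exact ENNReal.mul_lt_top (hft y).lt_top (hmm x hx0 y hy).lt_top
    refine integral_congr_ae ?_
    have hfe' : ∀ᵐ y ∂(volume.restrict (Ioo 0 x)), φ y = (f y).toReal :=
      ae_restrict_of_ae_restrict_of_subset (fun y hy => hy.1) hfe
    filter_upwards [ae_restrict_mem measurableSet_Ioo, hfe'] with y hy hfy
    have mI : Measurable (fun z => f z * (ENNReal.ofReal y * k y z)) := by
      refine mf.mul (measurable_const.mul ?_)
      exact mk.comp ((measurable_const (a := y)).prodMk measurable_id)
    rw [ENNReal.toReal_mul, ← integral_toReal mI.aemeasurable, ← integral_const_mul]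
    swap
    · filter_upwards [ae_restrict_mem measurableSet_Ioi] with z hz
      have hz' : 0 < z := by have : x - y < z := hz; linarith [hy.2]
      exact ENNReal.mul_lt_top (hft z).lt_top (ENNReal.mul_lt_top ENNReal.ofReal_lt_top
        ((kb y z hy.1 hz').trans_lt ENNReal.ofReal_lt_top))
    refine integral_congr_ae ?_
    have hfe2 : ∀ᵐ z ∂(volume.restrict (Ioi (x-y))), φ z = (f z).toReal :=
      ae_restrict_of_ae_restrict_of_subset (Ioi_subset_Ioi (by linarith [hy.2])) hfe
    filter_upwards [ae_restrict_mem measurableSet_Ioi, hfe2] with z hz hfz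
    have hz' : 0 < z := by have : x - y < z := hz; linarith [hy.2]
    have hkz : (k y z).toReal = Kern ε W y z := by
      simp only [hk, hw, Kern]
      rw [if_pos ⟨hy.1, hz'⟩, ENNReal.toReal_add (by norm_num) (ENNReal.mul_ne_top ENNReal.ofReal_ne_top ENNReal.ofReal_ne_top),
        ENNReal.toReal_mul, ENNReal.toReal_ofReal hε.le, ENNReal.toReal_ofReal (hb y z hy.1 hz').1]
      norm_num
    simp only [ENNReal.toReal_mul, hkz, ENNReal.toReal_ofReal hy.1.le, hfy, hfz]
    ring
  have hfin : ∀ᵐ x ∂(volume.restrict (Ioi (0:ℝ))), Reg f k x < ∞ := by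
    refine Reg_finite hα mf mk (fun y z => by simp only [hk, ws y z]) kb mass ?_
    filter_upwards [hReg, hfe, ae_restrict_mem measurableSet_Ioi] with x h1 h2 h3 h4
    have h3 : 0 < x := h3
    rw [h4] at h1
    simp only [ENNReal.toReal_top] at h1
    have h5 : φ x = 0 := by
      rcases mul_eq_zero.1 h1 with h | h
      · exact absurd h (by positivity)
      · exact h
    rw [h5] at h2
    rcases (ENNReal.toReal_eq_zero_iff _).1 h2.symm with h | h
    · exact h
    · exact absurd h (hft x)
  refine ⟨w, f, ⟨hα, hε, hε1, mf, mw, ws, wb, mass, ?_⟩, hft, hfe⟩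
  filter_upwards [hReg, hfe, hfin] with x h1 h2 h3
  change _ = Reg f k x
  rw [← ENNReal.ofReal_toReal h3.ne, ← h1, h2, ENNReal.ofReal_mul (by positivity), ENNReal.ofReal_toReal (hft x)]

lemma lint_Ioo {F h : ℝ → ℝ} {a b : ℝ} (hab : a ≤ b) (hd : ∀ x ∈ Icc a b, HasDerivAt F (h x) x)
    (hc : ContinuousOn h (Icc a b)) (hp : ∀ x ∈ Icc a b, 0 ≤ h x) :
    ∫⁻ x in Ioo a b, ENNReal.ofReal (h x) = ENNReal.ofReal (F b - F a) ∧ 0 ≤ F b - F a := by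
  have h1 : ∫ x in a..b, h x = F b - F a := by
    apply intervalIntegral.integral_eq_sub_of_hasDerivAt
    · rw [uIcc_of_le hab]; exact hd
    · rw [← uIcc_of_le hab] at hc; exact hc.intervalIntegrable
  have hi : IntegrableOn h (Ioc a b) := (hc.integrableOn_Icc).mono_set Ioc_subset_Icc_self
  rw [intervalIntegral.integral_of_le hab] at h1
  have hnn : 0 ≤ᵐ[volume.restrict (Ioc a b)] h := by
    filter_upwards [ae_restrict_mem measurableSet_Ioc] with x hx
    exact hp x (Ioc_subset_Icc_self hx)
  constructor
  · rw [← h1, ofReal_integral_eq_lintegral_ofReal hi hnn]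
    exact setLIntegral_congr Ioo_ae_eq_Ioc
  · rw [← h1]; exact integral_nonneg_of_ae hnn

noncomputable def MM (f : ℝ → ℝ≥0∞) (w : ℝ → ℝ → ℝ≥0∞) (p : ℝ) : ℝ≥0∞ :=
  ∫⁻ y, ∫⁻ z, w y z * (ENNReal.ofReal (1 - exp (-(p*y))) * ENNReal.ofReal (1 - exp (-(p*z)))) ∂(BM f) ∂(BM f)

lemma exp_aux (u : ℝ) (_hu : 0 ≤ u) : 0 ≤ 1 - (1+u) * exp (-u) := by
  have h := Real.add_one_le_exp u
  have h2 : exp u * exp (-u) = 1 := by rw [← Real.exp_add]; simp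
  have := Real.exp_pos (-u)
  nlinarith

lemma Prof.lap {α ε : ℝ} {w : ℝ → ℝ → ℝ≥0∞} {f : ℝ → ℝ≥0∞} (H : Prof α ε w f) {p : ℝ} (hp : 0 < p) :
    2 * ∫⁻ x, ENNReal.ofReal (1 - (1+p*x) * exp (-(p*x))) ∂(BM f) =
      2 * (∫⁻ x, ENNReal.ofReal (1 - exp (-(p*x))) ∂(BM f))^2 + ENNReal.ofReal ε * MM f w p := by
  have hm := H.master (h := fun x => ENNReal.ofReal ((1 - (1+p*x) * exp (-(p*x)))/x^2)) (by fun_prop)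
  have hL : ∫⁻ x, ENNReal.ofReal (x^2) * ENNReal.ofReal ((1 - (1+p*x) * exp (-(p*x)))/x^2) ∂(BM f) =
      ∫⁻ x, ENNReal.ofReal (1 - (1+p*x) * exp (-(p*x))) ∂(BM f) := by
    refine lintegral_congr_ae ?_
    filter_upwards [BM_pos (f := f)] with x hx
    rw [← ENNReal.ofReal_mul (by positivity)]
    congr 1
    field_simp
  rw [hL] at hm
  set D : ℝ → ℝ → ℝ := fun y z => (1 - exp (-(p*y))) - y/(y+z) * (1 - exp (-(p*(y+z)))) with hD
  have hder : ∀ x, 0 < x → HasDerivAt (fun x => - ((1 - exp (-(p*x)))/x)) ((1 - (1+p*x) * exp (-(p*x)))/x^2) x := by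
    intro x hx
    have h1 : HasDerivAt (fun x => 1 - exp (-(p*x))) (p * exp (-(p*x))) x := by
      have h0 := (((hasDerivAt_id' x).const_mul p).fun_neg.exp).const_sub 1
      exact h0.congr_deriv (by ring)
    have h2 := (h1.fun_div (hasDerivAt_id' x) hx.ne').fun_neg
    exact h2.congr_deriv (by field_simp; ring)
  have hDI : ∀ y z, 0 < y → 0 < z → 0 ≤ D y z ∧ ENNReal.ofReal y *
      (∫⁻ x in Ioo y (y+z), ENNReal.ofReal ((1 - (1+p*x) * exp (-(p*x)))/x^2)) = ENNReal.ofReal (D y z) := by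
    intro y z hy hz
    have hl := lint_Ioo (a := y) (b := y+z) (by linarith) (fun x hx => hder x (by linarith [hx.1]))
      (by
        refine ContinuousOn.div (by fun_prop) (by fun_prop) ?_
        intro x hx; have : 0 < x := by linarith [hx.1]
        positivity)
      (fun x hx => by
        have : 0 < x := by linarith [hx.1]
        exact div_nonneg (exp_aux (p*x) (by positivity)) (by positivity))
    have he : D y z = y * (-((1 - exp (-(p*(y+z))))/(y+z)) - -((1 - exp (-(p*y)))/y)) := by
      simp only [hD]; field_simp; ring
    constructor
    · rw [he]; exact mul_nonneg hy.le hl.2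
    · rw [hl.1, ← ENNReal.ofReal_mul hy.le, he]
  have hsum : ∀ y z, 0 < y → 0 < z → D y z + D z y = (1 - exp (-(p*y))) * (1 - exp (-(p*z))) := by
    intro y z hy hz
    simp only [hD]
    rw [add_comm z y, show -(p*(y+z)) = -(p*y) + -(p*z) by ring, Real.exp_add]
    field_simp
    ring
  have mD : Measurable (fun q : ℝ × ℝ => ENNReal.ofReal (D q.1 q.2)) := by
    simp only [hD]; fun_prop
  have mw := H.mw
  have mk := H.mk'
  have hR : ∫⁻ x, ENNReal.ofReal (1 - (1+p*x) * exp (-(p*x))) ∂(BM f) =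
      ∫⁻ y, ∫⁻ z, (2 + ENNReal.ofReal ε * w y z) * ENNReal.ofReal (D y z) ∂(BM f) ∂(BM f) := by
    rw [hm]
    refine lintegral_congr_ae ?_
    filter_upwards [BM_pos (f := f)] with y hy
    refine lintegral_congr_ae ?_
    filter_upwards [BM_pos (f := f)] with z hz
    rw [← (hDI y z hy hz).2]; ring
  have hR2 : ∫⁻ x, ENNReal.ofReal (1 - (1+p*x) * exp (-(p*x))) ∂(BM f) =
      ∫⁻ y, ∫⁻ z, (2 + ENNReal.ofReal ε * w y z) * ENNReal.ofReal (D z y) ∂(BM f) ∂(BM f) := by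
    rw [hR, lintegral_lintegral_swap]
    · refine lintegral_congr fun y => lintegral_congr fun z => ?_
      rw [H.symm]
    · exact (mk.mul mD).aemeasurable
  have mE : Measurable (fun q : ℝ × ℝ => (2 + ENNReal.ofReal ε * w q.1 q.2) * ENNReal.ofReal (D q.1 q.2)) := mk.mul mD
  have mu : Measurable (fun x : ℝ => ENNReal.ofReal (1 - exp (-(p*x)))) := by fun_prop
  have mwu : Measurable (fun q : ℝ × ℝ => w q.1 q.2 * (ENNReal.ofReal (1 - exp (-(p*q.1))) * ENNReal.ofReal (1 - exp (-(p*q.2))))) :=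
    mw.mul (by fun_prop)
  rw [two_mul]
  nth_rewrite 1 [hR]
  rw [hR2, ← lintegral_add_left mE.lintegral_prod_right']
  have step : ∀ᵐ y ∂(BM f), (∫⁻ z, (2 + ENNReal.ofReal ε * w y z) * ENNReal.ofReal (D y z) ∂(BM f)) +
      ∫⁻ z, (2 + ENNReal.ofReal ε * w y z) * ENNReal.ofReal (D z y) ∂(BM f) =
      2 * (ENNReal.ofReal (1 - exp (-(p*y))) * ∫⁻ z, ENNReal.ofReal (1 - exp (-(p*z))) ∂(BM f)) +
      ENNReal.ofReal ε * ∫⁻ z, w y z * (ENNReal.ofReal (1 - exp (-(p*y))) * ENNReal.ofReal (1 - exp (-(p*z)))) ∂(BM f) := by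
    filter_upwards [BM_pos (f := f)] with y hy
    have m1 : Measurable (fun z => (2 + ENNReal.ofReal ε * w y z) * ENNReal.ofReal (D y z)) :=
      mE.comp ((measurable_const (a := y)).prodMk measurable_id)
    have m2 : Measurable (fun z => w y z * (ENNReal.ofReal (1 - exp (-(p*y))) * ENNReal.ofReal (1 - exp (-(p*z))))) :=
      mwu.comp ((measurable_const (a := y)).prodMk measurable_id)
    rw [← lintegral_add_left m1, ← lintegral_const_mul _ mu, ← lintegral_const_mul _ (mu.const_mul _),
      ← lintegral_const_mul _ m2, ← lintegral_add_right _ (m2.const_mul _)]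
    refine lintegral_congr_ae ?_
    filter_upwards [BM_pos (f := f)] with z hz
    have hu : 0 ≤ 1 - exp (-(p*y)) := by
      have : exp (-(p*y)) ≤ 1 := Real.exp_le_one_iff.2 (by have := mul_pos hp hy; linarith)
      linarith
    rw [← mul_add, ← ENNReal.ofReal_add (hDI y z hy hz).1 (hDI z y hz hy).1, hsum y z hy hz,
      ENNReal.ofReal_mul hu]
    ring
  rw [lintegral_congr_ae step, lintegral_add_right _ (mwu.lintegral_prod_right'.const_mul _),
    lintegral_const_mul _ mwu.lintegral_prod_right', lintegral_const_mul _ (mu.mul_const _),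
    lintegral_mul_const _ mu]
  unfold MM
  ring

noncomputable def Qr (f : ℝ → ℝ≥0∞) (p : ℝ) : ℝ := ∫ x, (1 - exp (-(p*x))) ∂(BM f)
noncomputable def Pr (f : ℝ → ℝ≥0∞) (p : ℝ) : ℝ := ∫ x, x * exp (-(p*x)) ∂(BM f)

section
variable {α ε : ℝ} {w : ℝ → ℝ → ℝ≥0∞} {f : ℝ → ℝ≥0∞}

lemma Prof.int_x (H : Prof α ε w f) : Integrable (fun x => x) (BM f) := by
  refine ⟨by fun_prop, ?_⟩
  rw [hasFiniteIntegral_iff_norm]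
  have : ∫⁻ x, ENNReal.ofReal ‖x‖ ∂(BM f) = ∫⁻ x, ENNReal.ofReal x ∂(BM f) := by
    refine lintegral_congr_ae ?_
    filter_upwards [BM_pos (f := f)] with x hx
    rw [Real.norm_of_nonneg hx.le]
  rw [this, H.mass]; simp

lemma Prof.mean (H : Prof α ε w f) : ∫ x, x ∂(BM f) = 1 := by
  rw [integral_eq_lintegral_of_nonneg_ae, H.mass]
  · simp
  · filter_upwards [BM_pos (f := f)] with x hx using hx.le
  · fun_prop

lemma one_sub_exp_nonneg {u : ℝ} (hu : 0 ≤ u) : 0 ≤ 1 - exp (-u) := by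
  have : exp (-u) ≤ 1 := Real.exp_le_one_iff.2 (by linarith)
  linarith

lemma one_sub_exp_le (u : ℝ) : 1 - exp (-u) ≤ u := by
  have := Real.add_one_le_exp (-u); linarith

lemma Prof.int_u (H : Prof α ε w f) {p : ℝ} (hp : 0 ≤ p) : Integrable (fun x => 1 - exp (-(p*x))) (BM f) := by
  refine (H.int_x.const_mul p).mono' (by fun_prop) ?_
  filter_upwards [BM_pos (f := f)] with x hx
  rw [Real.norm_of_nonneg (one_sub_exp_nonneg (by positivity))]
  exact one_sub_exp_le _

lemma Prof.int_xe (H : Prof α ε w f) {p : ℝ} (hp : 0 ≤ p) : Integrable (fun x => x * exp (-(p*x))) (BM f) := by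
  refine H.int_x.mono' (by fun_prop) ?_
  filter_upwards [BM_pos (f := f)] with x hx
  rw [Real.norm_of_nonneg (by positivity)]
  have : exp (-(p*x)) ≤ 1 := Real.exp_le_one_iff.2 (by have : 0 ≤ p*x := by positivity
                                                       linarith)
  nlinarith

lemma Prof.Q_le (H : Prof α ε w f) {p : ℝ} (hp : 0 ≤ p) : Qr f p ≤ p := by
  have : Qr f p ≤ ∫ x, p * x ∂(BM f) := by
    refine integral_mono_ae (H.int_u hp) (H.int_x.const_mul p) ?_
    filter_upwards with x
    exact one_sub_exp_le _
  rw [integral_const_mul, H.mean, mul_one] at this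
  exact this

lemma Prof.Q_nonneg {p : ℝ} (hp : 0 ≤ p) : 0 ≤ Qr f p := by
  refine integral_nonneg_of_ae ?_
  filter_upwards [BM_pos (f := f)] with x hx
  exact one_sub_exp_nonneg (by positivity)

lemma Prof.Q_lint (H : Prof α ε w f) {p : ℝ} (hp : 0 ≤ p) :
    ∫⁻ x, ENNReal.ofReal (1 - exp (-(p*x))) ∂(BM f) = ENNReal.ofReal (Qr f p) := by
  unfold Qr
  rw [ofReal_integral_eq_lintegral_ofReal (H.int_u hp)]
  filter_upwards [BM_pos (f := f)] with x hx
  exact one_sub_exp_nonneg (by positivity)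

/-- the Laplace side equation -/
lemma Prof.lap_real (H : Prof α ε w f) {p : ℝ} (hp : 0 < p) :
    ∃ r : ℝ, 0 ≤ r ∧ Qr f p - p * Pr f p = Qr f p ^ 2 + r ∧ ENNReal.ofReal (2*r) = ENNReal.ofReal ε * MM f w p := by
  have h := H.lap hp
  rw [H.Q_lint hp.le] at h
  have hi : Integrable (fun x => 1 - (1+p*x) * exp (-(p*x))) (BM f) := by
    have := (H.int_u hp.le).sub ((H.int_xe hp.le).const_mul p)
    refine this.congr ?_
    filter_upwards with x
    simp; ring
  have hI : ∫ x, (1 - (1+p*x) * exp (-(p*x))) ∂(BM f) = Qr f p - p * Pr f p := by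
    unfold Qr Pr
    rw [← integral_const_mul, ← integral_sub (H.int_u hp.le) ((H.int_xe hp.le).const_mul p)]
    congr 1; ext x; ring
  have hnn : 0 ≤ᵐ[BM f] (fun x => 1 - (1+p*x) * exp (-(p*x))) := by
    filter_upwards [BM_pos (f := f)] with x hx
    exact exp_aux _ (by positivity)
  have hI0 : 0 ≤ Qr f p - p * Pr f p := by rw [← hI]; exact integral_nonneg_of_ae hnn
  rw [← ofReal_integral_eq_lintegral_ofReal hi hnn, hI] at h
  have hQ := Prof.Q_nonneg (f := f) hp.le
  have e2 : (2:ℝ≥0∞) = ENNReal.ofReal 2 := by simp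
  rw [e2, ← ENNReal.ofReal_pow hQ, ← ENNReal.ofReal_mul (by norm_num), ← ENNReal.ofReal_mul (by norm_num)] at h
  have hfin : ENNReal.ofReal ε * MM f w p ≠ ∞ := by
    intro ht; rw [ht, add_top] at h; exact ENNReal.ofReal_ne_top h
  set m := (ENNReal.ofReal ε * MM f w p).toReal with hm
  have hme : ENNReal.ofReal ε * MM f w p = ENNReal.ofReal m := (ENNReal.ofReal_toReal hfin).symm
  have hm0 : 0 ≤ m := ENNReal.toReal_nonneg
  rw [hme, ← ENNReal.ofReal_add (by positivity) hm0] at h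
  have h2 := (ENNReal.ofReal_eq_ofReal_iff (by positivity) (by positivity)).1 h
  refine ⟨m/2, by positivity, by linarith, ?_⟩
  rw [hme]; congr 1; ring

lemma Prof.Q_deriv (H : Prof α ε w f) {p : ℝ} (hp : 0 < p) : HasDerivAt (Qr f) (Pr f p) p := by
  unfold Pr
  have := hasDerivAt_integral_of_dominated_loc_of_deriv_le (μ := BM f) (x₀ := p) (s := Metric.ball p p)
    (F := fun p x => 1 - exp (-(p*x))) (F' := fun p x => x * exp (-(p*x))) (bound := fun x => x)
    (Metric.ball_mem_nhds p hp)
    (Eventually.of_forall fun q => by fun_prop) (H.int_u hp.le) (by fun_prop) ?_ H.int_x ?_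
  · exact this.2
  · filter_upwards [BM_pos (f := f)] with x hx q hq
    have hq0 : 0 < q := by
      rw [Metric.mem_ball, Real.dist_eq, abs_lt] at hq; linarith [hq.1]
    rw [Real.norm_of_nonneg (by positivity)]
    have : exp (-(q*x)) ≤ 1 := Real.exp_le_one_iff.2 (by have : 0 ≤ q*x := by positivity
                                                         linarith)
    nlinarith
  · filter_upwards with x q hq
    have h0 := (((hasDerivAt_id' q).mul_const x).fun_neg.exp).const_sub 1
    exact h0.congr_deriv (by ring)
end

section
variable {α ε : ℝ} {w : ℝ → ℝ → ℝ≥0∞} {f : ℝ → ℝ≥0∞}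

lemma Prof.Q_upper (H : Prof α ε w f) {p : ℝ} (hp : 0 < p) : Qr f p ≤ p/(1+p) := by
  set v : ℝ → ℝ := fun p => Qr f p * (p + 2 + p⁻¹) - p with hv
  have hd : ∀ q, 0 < q → HasDerivAt v (Pr f q * (q + 2 + q⁻¹) + Qr f q * (1 - (q^2)⁻¹) - 1) q := by
    intro q hq
    have h1 : HasDerivAt (fun q : ℝ => q + 2 + q⁻¹) (1 - (q^2)⁻¹) q := by
      have := ((hasDerivAt_id' q).add_const 2).fun_add (hasDerivAt_inv hq.ne')
      exact this.congr_deriv (by ring)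
    exact ((H.Q_deriv hq).fun_mul h1).fun_sub (hasDerivAt_id' q)
  have hanti : AntitoneOn v (Ioi 0) := by
    refine antitoneOn_of_deriv_nonpos (convex_Ioi 0) ?_ ?_ ?_
    · exact fun q hq => (hd q hq).continuousAt.continuousWithinAt
    · rw [interior_Ioi]; exact fun q hq => (hd q hq).differentiableAt.differentiableWithinAt
    · rw [interior_Ioi]; intro q hq
      have hq : 0 < q := hq
      rw [(hd q hq).deriv]
      obtain ⟨r, hr, h1, -⟩ := H.lap_real hq
      have h2 : Pr f q = (Qr f q - Qr f q^2 - r)/q := by field_simp; linarith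
      have h3 : Pr f q * (q + 2 + q⁻¹) + Qr f q * (1 - (q^2)⁻¹) - 1 =
        -((Qr f q * (1+q) - q)^2 + r * (1+q)^2)/q^2 := by
        rw [h2]; field_simp; ring
      rw [h3]
      have : 0 ≤ ((Qr f q * (1+q) - q)^2 + r * (1+q)^2)/q^2 := by positivity
      rw [neg_div]; linarith
  have hlim : Tendsto (fun q : ℝ => 1 + q + q^2) (𝓝[>] 0) (𝓝 1) := by
    have : Tendsto (fun q : ℝ => 1 + q + q^2) (𝓝 0) (𝓝 (1 + 0 + 0^2)) := Continuous.tendsto (by fun_prop) 0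
    simp only [add_zero, ne_eq, OfNat.ofNat_ne_zero, not_false_eq_true, zero_pow] at this
    exact this.mono_left nhdsWithin_le_nhds
  have hle : v p ≤ 1 := by
    refine ge_of_tendsto hlim ?_
    have : ∀ᶠ q in 𝓝[>] (0:ℝ), q ∈ Ioo 0 p := Ioo_mem_nhdsGT hp
    filter_upwards [this] with q hq
    refine (hanti (a := q) hq.1 hp hq.2.le).trans ?_
    have h1 := H.Q_le hq.1.le
    have hq0 := hq.1
    simp only [hv]
    have : Qr f q * (q + 2 + q⁻¹) ≤ q * (q + 2 + q⁻¹) := by gcongr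
    have e : q * (q + 2 + q⁻¹) = q^2 + 2*q + 1 := by field_simp
    linarith
  simp only [hv] at hle
  have e : Qr f p * (p + 2 + p⁻¹) = Qr f p * (1+p)^2/p := by field_simp; ring
  rw [e] at hle
  have h2 : Qr f p * (1+p)^2/p ≤ 1 + p := by linarith
  rw [div_le_iff₀ hp] at h2
  rw [le_div_iff₀ (by linarith)]
  have h3 : (Qr f p * (1+p)) * (1+p) ≤ p * (1+p) := by nlinarith
  exact le_of_mul_le_mul_right h3 (by linarith)

lemma Prof.N_le (H : Prof α ε w f) : BM f univ ≤ 1 := by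
  have h : Tendsto (fun n : ℕ => ∫⁻ x, ENNReal.ofReal (1 - exp (-((n:ℝ)*x))) ∂(BM f)) atTop
      (𝓝 (∫⁻ x, 1 ∂(BM f))) := by
    refine lintegral_tendsto_of_tendsto_of_monotone (fun n => by fun_prop) ?_ ?_
    · filter_upwards [BM_pos (f := f)] with x hx n m hnm
      refine ENNReal.ofReal_le_ofReal ?_
      have : (n:ℝ) ≤ m := by exact_mod_cast hnm
      gcongr
    · filter_upwards [BM_pos (f := f)] with x hx
      have : Tendsto (fun n : ℕ => ENNReal.ofReal (1 - exp (-((n:ℝ)*x)))) atTop (𝓝 (ENNReal.ofReal (1 - 0))) := by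
        refine ENNReal.tendsto_ofReal (tendsto_const_nhds.sub ?_)
        refine Real.tendsto_exp_neg_atTop_nhds_zero.comp ?_
        exact tendsto_natCast_atTop_atTop.atTop_mul_const hx
      simpa using this
  rw [lintegral_one] at h
  refine le_of_tendsto h ?_
  filter_upwards [eventually_gt_atTop 0] with n hn
  have hn' : (0:ℝ) < n := by exact_mod_cast hn
  rw [H.Q_lint hn'.le, ← ENNReal.ofReal_one]
  refine ENNReal.ofReal_le_ofReal ((H.Q_upper hn').trans ?_)
  rw [div_le_one (by linarith)]; linarith

lemma Prof.fin (H : Prof α ε w f) : IsFiniteMeasure (BM f) :=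
  ⟨H.N_le.trans_lt ENNReal.one_lt_top⟩

noncomputable def Mo (f : ℝ → ℝ≥0∞) (t : ℝ) : ℝ≥0∞ := ∫⁻ x, ENNReal.ofReal (x^t) ∂(BM f)

lemma Prof.Mo_mono (H : Prof α ε w f) {s t : ℝ} (hs : 0 ≤ s) (hst : s ≤ t) : Mo f s ≤ 1 + Mo f t := by
  calc Mo f s ≤ ∫⁻ x, 1 + ENNReal.ofReal (x^t) ∂(BM f) := by
        refine lintegral_mono_ae ?_
        filter_upwards [BM_pos (f := f)] with x hx
        rcases le_total x 1 with h | h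
        · refine le_trans ?_ le_self_add
          rw [← ENNReal.ofReal_one]
          exact ENNReal.ofReal_le_ofReal (Real.rpow_le_one hx.le h hs)
        · refine le_trans ?_ le_add_self
          exact ENNReal.ofReal_le_ofReal (Real.rpow_le_rpow_of_exponent_le h hst)
    _ = BM f univ + Mo f t := by rw [lintegral_add_left measurable_const, lintegral_one]; rfl
    _ ≤ _ := by gcongr; exact H.N_le

lemma Prof.Mo_one (H : Prof α ε w f) : Mo f 1 = 1 := by
  unfold Mo; simp only [Real.rpow_one]; exact H.mass

lemma Prof.Mo_two (H : Prof α ε w f) {s : ℝ} (hs : 0 ≤ s) (hs1 : s ≤ 1) : Mo f s ≤ 2 := by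
  refine (H.Mo_mono hs hs1).trans ?_
  rw [H.Mo_one]; norm_num

lemma lint_prod_rpow (C : ℝ≥0∞) (a b c d : ℝ) :
    ∫⁻ y, ∫⁻ z, C * (ENNReal.ofReal (y^a) * ENNReal.ofReal (z^b) + ENNReal.ofReal (y^c) * ENNReal.ofReal (z^d))
      ∂(BM f) ∂(BM f) = C * (Mo f a * Mo f b + Mo f c * Mo f d) := by
  have h1 : ∀ y : ℝ, ∫⁻ z, C * (ENNReal.ofReal (y^a) * ENNReal.ofReal (z^b) + ENNReal.ofReal (y^c) * ENNReal.ofReal (z^d)) ∂(BM f) = C * (ENNReal.ofReal (y^a) * Mo f b + ENNReal.ofReal (y^c) * Mo f d) := by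
    intro y
    rw [lintegral_const_mul _ (by fun_prop), lintegral_add_left (by fun_prop),
      lintegral_const_mul _ (by fun_prop), lintegral_const_mul _ (by fun_prop)]
    rfl
  simp_rw [h1]
  rw [lintegral_const_mul _ (by fun_prop), lintegral_add_left (by fun_prop),
      lintegral_mul_const _ (by fun_prop), lintegral_mul_const _ (by fun_prop)]
  rfl

lemma ratio_bd {α : ℝ} (hα : 0 < α) {y z : ℝ} (hy : 0 < y) (hz : z ≤ y) (hz0 : 0 < z) :
    2 + (y/z)^α + (z/y)^α ≤ 4 * (y^α * z^(-α)) := by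
  have h1 : (z/y)^α ≤ 1 := Real.rpow_le_one (by positivity) ((div_le_one hy).2 hz) hα.le
  have h2 : 1 ≤ (y/z)^α := Real.one_le_rpow ((one_le_div hz0).2 hz) hα.le
  have h3 : (y/z)^α = y^α * z^(-α) := by
    rw [Real.div_rpow hy.le hz0.le, Real.rpow_neg hz0.le]; rfl
  rw [← h3]; linarith

lemma Prof.k_bd (H : Prof α ε w f) {y z : ℝ} (hy : 0 < y) (hz : 0 < z) :
    2 + ENNReal.ofReal ε * w y z ≤ ENNReal.ofReal (2 + (y/z)^α + (z/y)^α) := by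
  have h1 : ENNReal.ofReal ε ≤ 1 := by rw [← ENNReal.ofReal_one]; exact ENNReal.ofReal_le_ofReal H.hε1
  calc 2 + ENNReal.ofReal ε * w y z ≤ 2 + 1 * ENNReal.ofReal ((y/z)^α + (z/y)^α) := by
        gcongr; exact H.bd y z hy hz
    _ = ENNReal.ofReal 2 + ENNReal.ofReal ((y/z)^α + (z/y)^α) := by simp
    _ = _ := by rw [← ENNReal.ofReal_add (by norm_num) (by positivity), add_assoc]

lemma Prof.Mo_step (H : Prof α ε w f) {s : ℝ} (hs : 1 ≤ s) :
    Mo f (s + (1-α)) ≤ ENNReal.ofReal (16 * 2^s/(1-α)) * Mo f s := by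
  have hα := H.hα
  have h1α : 0 < 1 - α := by linarith [hα.2]
  set C := 4 * 2^s/(1-α) with hC
  have hC0 : 0 ≤ C := by positivity
  have hm := H.master (h := fun x => ENNReal.ofReal (x^(s-1-α))) (by fun_prop)
  have hL : ∫⁻ x, ENNReal.ofReal (x^2) * ENNReal.ofReal (x^(s-1-α)) ∂(BM f) = Mo f (s + (1-α)) := by
    refine lintegral_congr_ae ?_
    filter_upwards [BM_pos (f := f)] with x hx
    rw [← ENNReal.ofReal_mul (by positivity)]
    congr 1
    rw [← Real.rpow_natCast, ← Real.rpow_add hx]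
    congr 1; push_cast; ring
  rw [← hL, hm]
  have hpt : ∀ y z, 0 < y → 0 < z → ENNReal.ofReal y * (2 + ENNReal.ofReal ε * w y z) *
      (∫⁻ x in Ioo y (y+z), ENNReal.ofReal (x^(s-1-α))) ≤
      ENNReal.ofReal C * (ENNReal.ofReal (y^s) * ENNReal.ofReal (z^(1-α)) + ENNReal.ofReal (y^(1-α)) * ENNReal.ofReal (z^s)) := by
    intro y z hy hz
    have hk := H.k_bd hy hz
    rcases le_total z y with hzy | hzy
    · refine le_trans ?_ (mul_le_mul_right le_self_add _)
      have hI : (∫⁻ x in Ioo y (y+z), ENNReal.ofReal (x^(s-1-α))) ≤ ENNReal.ofReal ((2*y)^(s-1) * y^(-α) * z) := by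
        calc (∫⁻ x in Ioo y (y+z), ENNReal.ofReal (x^(s-1-α))) ≤ ∫⁻ x in Ioo y (y+z), ENNReal.ofReal ((2*y)^(s-1) * y^(-α)) := by
              refine setLIntegral_mono measurable_const ?_
              intro x hx
              have hx0 : 0 < x := by linarith [hx.1]
              refine ENNReal.ofReal_le_ofReal ?_
              rw [show s-1-α = (s-1) + (-α) by ring, Real.rpow_add hx0]
              gcongr ?_ * ?_
              · exact Real.rpow_le_rpow hx0.le (by linarith [hx.2]) (by linarith)
              · exact Real.rpow_le_rpow_of_nonpos hy hx.1.le (by linarith [hα.1])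
          _ = _ := by
              rw [setLIntegral_const, Real.volume_Ioo, ← ENNReal.ofReal_mul (by positivity)]
              congr 2; ring
      calc ENNReal.ofReal y * (2 + ENNReal.ofReal ε * w y z) * (∫⁻ x in Ioo y (y+z), ENNReal.ofReal (x^(s-1-α)))
          ≤ ENNReal.ofReal y * ENNReal.ofReal (4 * (y^α * z^(-α))) * ENNReal.ofReal ((2*y)^(s-1) * y^(-α) * z) := by
            gcongr
            exact hk.trans (ENNReal.ofReal_le_ofReal (ratio_bd hα.1 hy hzy hz))
        _ = ENNReal.ofReal (4 * 2^(s-1) * (y^s * z^(1-α))) := by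
            rw [← ENNReal.ofReal_mul (by positivity), ← ENNReal.ofReal_mul (by positivity)]
            congr 1
            rw [Real.mul_rpow (by norm_num) hy.le, show (1:ℝ)-α = -α + 1 by ring, Real.rpow_add_one hz.ne']
            have e1 : y^s = y^(s-1) * y := by rw [← Real.rpow_add_one hy.ne']; congr 1; ring
            have e2 : y^α * y^(-α) = 1 := by rw [← Real.rpow_add hy]; simp
            rw [e1]
            linear_combination (4 * 2^(s-1) * y^(s-1) * y * z^(-α) * z) * e2
        _ ≤ ENNReal.ofReal (C * (y^s * z^(1-α))) := by
            refine ENNReal.ofReal_le_ofReal ?_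
            gcongr
            rw [hC, le_div_iff₀ h1α]
            have : (2:ℝ)^(s-1) ≤ 2^s := Real.rpow_le_rpow_of_exponent_le (by norm_num) (by linarith)
            have h0 : (0:ℝ) < 2^(s-1) := by positivity
            nlinarith [hα.1, hα.2]
        _ = _ := by rw [ENNReal.ofReal_mul hC0, ENNReal.ofReal_mul (by positivity)]
    · refine le_trans ?_ (mul_le_mul_right le_add_self _)
      have hl := lint_Ioo (F := fun x => x^(1-α)/(1-α)) (h := fun x => x^(-α)) (a := y) (b := y+z) (by linarith)
        (fun x hx => by
          have hx0 : 0 < x := by linarith [hx.1]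
          have := (Real.hasDerivAt_rpow_const (x := x) (p := 1-α) (Or.inl hx0.ne')).div_const (1-α)
          refine this.congr_deriv ?_
          rw [show 1 - α - 1 = -α by ring]; field_simp)
        (fun x hx => by
          have hx0 : 0 < x := by linarith [hx.1]
          exact (Real.continuousAt_rpow_const _ _ (Or.inl hx0.ne')).continuousWithinAt)
        (fun x hx => by
          have hx0 : 0 < x := by linarith [hx.1]
          positivity)
      have hI : (∫⁻ x in Ioo y (y+z), ENNReal.ofReal (x^(s-1-α))) ≤ ENNReal.ofReal ((2*z)^(s-1) * ((2*z)^(1-α)/(1-α))) := by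
        calc (∫⁻ x in Ioo y (y+z), ENNReal.ofReal (x^(s-1-α))) ≤ ∫⁻ x in Ioo y (y+z), ENNReal.ofReal ((2*z)^(s-1)) * ENNReal.ofReal (x^(-α)) := by
              refine setLIntegral_mono (by fun_prop) ?_
              intro x hx
              have hx0 : 0 < x := by linarith [hx.1]
              rw [← ENNReal.ofReal_mul (by positivity)]
              refine ENNReal.ofReal_le_ofReal ?_
              rw [show s-1-α = (s-1) + (-α) by ring, Real.rpow_add hx0]
              gcongr ?_ * _
              exact Real.rpow_le_rpow hx0.le (by linarith [hx.2]) (by linarith)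
          _ = ENNReal.ofReal ((2*z)^(s-1)) * ENNReal.ofReal ((y+z)^(1-α)/(1-α) - y^(1-α)/(1-α)) := by
              rw [lintegral_const_mul _ (by fun_prop), hl.1]
          _ ≤ _ := by
              rw [← ENNReal.ofReal_mul (by positivity)]
              refine ENNReal.ofReal_le_ofReal ?_
              gcongr
              have : (y+z)^(1-α)/(1-α) ≤ (2*z)^(1-α)/(1-α) := by gcongr; linarith
              have : 0 ≤ y^(1-α)/(1-α) := by positivity
              linarith
      calc ENNReal.ofReal y * (2 + ENNReal.ofReal ε * w y z) * (∫⁻ x in Ioo y (y+z), ENNReal.ofReal (x^(s-1-α)))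
          ≤ ENNReal.ofReal y * ENNReal.ofReal (4 * (z^α * y^(-α))) * ENNReal.ofReal ((2*z)^(s-1) * ((2*z)^(1-α)/(1-α))) := by
            gcongr
            refine hk.trans (ENNReal.ofReal_le_ofReal ?_)
            have := ratio_bd hα.1 hz hzy hy
            linarith
        _ = ENNReal.ofReal (4 * 2^(s-α)/(1-α) * (y^(1-α) * z^s)) := by
            rw [← ENNReal.ofReal_mul (by positivity), ← ENNReal.ofReal_mul (by positivity)]
            congr 1
            have e0 : (2*z)^(s-1) * (2*z)^(1-α) = 2^(s-α) * z^(s-α) := by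
              rw [← Real.rpow_add (by positivity), ← Real.mul_rpow (by norm_num) hz.le]; congr 1; ring
            have e1 : z^s = z^α * z^(s-α) := by rw [← Real.rpow_add hz]; congr 1; ring
            have e2 : y^(1-α) = y^(-α) * y := by rw [← Real.rpow_add_one hy.ne']; congr 1; ring
            rw [e1, e2, ← mul_div_assoc, e0]; ring
        _ ≤ ENNReal.ofReal (C * (y^(1-α) * z^s)) := by
            refine ENNReal.ofReal_le_ofReal ?_
            rw [hC]
            have : (2:ℝ)^(s-α) ≤ 2^s := Real.rpow_le_rpow_of_exponent_le (by norm_num) (by linarith [hα.1])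
            gcongr
        _ = _ := by rw [ENNReal.ofReal_mul hC0, ENNReal.ofReal_mul (by positivity)]
  calc _ ≤ ∫⁻ y, ∫⁻ z, ENNReal.ofReal C * (ENNReal.ofReal (y^s) * ENNReal.ofReal (z^(1-α)) + ENNReal.ofReal (y^(1-α)) * ENNReal.ofReal (z^s)) ∂(BM f) ∂(BM f) := by
        refine lintegral_mono_ae ?_
        filter_upwards [BM_pos (f := f)] with y hy
        refine lintegral_mono_ae ?_
        filter_upwards [BM_pos (f := f)] with z hz
        exact hpt y z hy hz
    _ = ENNReal.ofReal C * (Mo f s * Mo f (1-α) + Mo f (1-α) * Mo f s) := lint_prod_rpow _ _ _ _ _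
    _ ≤ ENNReal.ofReal C * (Mo f s * 2 + 2 * Mo f s) := by
        have := H.Mo_two (s := 1-α) h1α.le (by linarith [hα.1])
        gcongr
    _ = _ := by
        have e : 16 * 2^s/(1-α) = C * 4 := by rw [hC]; ring
        rw [e, ENNReal.ofReal_mul hC0]
        have : ENNReal.ofReal 4 = 4 := by simp
        rw [this]; ring

end

/-- uniform moment bounds -/
lemma Mo_bound {α : ℝ} (hα : α ∈ Ioo (0:ℝ) 1) {t : ℝ} (ht : 0 ≤ t) : ∃ C : ℝ, 0 ≤ C ∧ ∀ ε w f, Prof α ε w f →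
    Mo f t ≤ ENNReal.ofReal C := by
  have h1α : 0 < 1 - α := by linarith [hα.2]
  have hk : ∀ n : ℕ, ∃ C : ℝ, 0 ≤ C ∧ ∀ ε w f, Prof α ε w f → Mo f (1 + n * (1-α)) ≤ ENNReal.ofReal C := by
    intro n
    induction n with
    | zero => exact ⟨1, by norm_num, fun ε w f H => by simp [H.Mo_one]⟩
    | succ n ih =>
      obtain ⟨C, hC, h⟩ := ih
      refine ⟨16 * 2^(1 + n * (1-α))/(1-α) * C, by positivity, fun ε w f H => ?_⟩
      have hs := H.Mo_step (s := 1 + n * (1-α)) (by have : 0 ≤ n * (1-α) := by positivity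
                                                    linarith)
      rw [ENNReal.ofReal_mul (by positivity)]
      have e : (1 + ((n+1 : ℕ):ℝ) * (1-α)) = 1 + n * (1-α) + (1-α) := by push_cast; ring
      rw [e]
      refine hs.trans ?_
      gcongr
      exact h ε w f H
  obtain ⟨n, hn⟩ := exists_nat_gt (t/(1-α))
  rw [div_lt_iff₀ h1α] at hn
  obtain ⟨C, hC, h⟩ := hk n
  refine ⟨1 + C, by positivity, fun ε w f H => ?_⟩
  rw [ENNReal.ofReal_add (by norm_num) hC, ENNReal.ofReal_one]
  refine (H.Mo_mono (t := 1 + n * (1-α)) ht (by linarith)).trans ?_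
  gcongr; exact h ε w f H

/-- the bilinear error moment -/
noncomputable def YZ (f : ℝ → ℝ≥0∞) (w : ℝ → ℝ → ℝ≥0∞) : ℝ≥0∞ :=
  ∫⁻ y, ∫⁻ z, w y z * (ENNReal.ofReal y * ENNReal.ofReal z) ∂(BM f) ∂(BM f)

lemma YZ_bound {α : ℝ} (hα : α ∈ Ioo (0:ℝ) 1) : ∃ C : ℝ, 0 ≤ C ∧ ∀ ε w f, Prof α ε w f →
    YZ f w ≤ ENNReal.ofReal C := by
  have h1α : 0 < 1 - α := by linarith [hα.2]
  obtain ⟨C, hC, h⟩ := Mo_bound hα (t := 1 + α) (by linarith [hα.1])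
  refine ⟨4 * C, by positivity, fun ε w f H => ?_⟩
  calc YZ f w ≤ ∫⁻ y, ∫⁻ z, 1 * (ENNReal.ofReal (y^(1+α)) * ENNReal.ofReal (z^(1-α)) + ENNReal.ofReal (y^(1-α)) * ENNReal.ofReal (z^(1+α))) ∂(BM f) ∂(BM f) := by
        refine lintegral_mono_ae ?_
        filter_upwards [BM_pos (f := f)] with y hy
        refine lintegral_mono_ae ?_
        filter_upwards [BM_pos (f := f)] with z hz
        calc w y z * (ENNReal.ofReal y * ENNReal.ofReal z) ≤ ENNReal.ofReal ((y/z)^α + (z/y)^α) * (ENNReal.ofReal y * ENNReal.ofReal z) := by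
              gcongr; exact H.bd y z hy hz
          _ = _ := by
              rw [← ENNReal.ofReal_mul (by positivity), ← ENNReal.ofReal_mul (by positivity), ← ENNReal.ofReal_mul (by positivity),
                ← ENNReal.ofReal_mul (by positivity), ← ENNReal.ofReal_add (by positivity) (by positivity), one_mul]
              congr 1
              rw [Real.div_rpow hy.le hz.le, Real.div_rpow hz.le hy.le, Real.rpow_add hy, Real.rpow_add hz, Real.rpow_sub hy, Real.rpow_sub hz,
                Real.rpow_one, Real.rpow_one]
              ring
    _ = 1 * (Mo f (1+α) * Mo f (1-α) + Mo f (1-α) * Mo f (1+α)) := lint_prod_rpow _ _ _ _ _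
    _ ≤ 1 * (ENNReal.ofReal C * 2 + 2 * ENNReal.ofReal C) := by
        have := H.Mo_two (s := 1-α) h1α.le (by linarith [hα.1])
        have := h ε w f H
        gcongr
    _ = _ := by
        rw [ENNReal.ofReal_mul (by norm_num)]
        have : ENNReal.ofReal 4 = 4 := by simp
        rw [this]; ring

section
variable {α ε : ℝ} {w : ℝ → ℝ → ℝ≥0∞} {f : ℝ → ℝ≥0∞}

lemma Prof.MM_le (H : Prof α ε w f) {p : ℝ} (hp : 0 < p) : MM f w p ≤ ENNReal.ofReal (p^2) * YZ f w := by
  have m : Measurable (fun q : ℝ × ℝ => w q.1 q.2 * (ENNReal.ofReal q.1 * ENNReal.ofReal q.2)) := H.mw.mul (by fun_prop)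
  unfold MM YZ
  rw [← lintegral_const_mul _ m.lintegral_prod_right']
  refine lintegral_mono_ae ?_
  filter_upwards [BM_pos (f := f)] with y hy
  have m2 : Measurable (fun z => w y z * (ENNReal.ofReal y * ENNReal.ofReal z)) :=
      m.comp ((measurable_const (a := y)).prodMk measurable_id)
  rw [← lintegral_const_mul _ m2]
  refine lintegral_mono_ae ?_
  filter_upwards [BM_pos (f := f)] with z hz
  calc _ ≤ w y z * (ENNReal.ofReal (p*y) * ENNReal.ofReal (p*z)) := by
        gcongr
        · exact one_sub_exp_le _
        · exact one_sub_exp_le _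
    _ = _ := by
        rw [ENNReal.ofReal_mul hp.le, ENNReal.ofReal_mul hp.le, ENNReal.ofReal_pow hp.le]; ring

lemma Prof.r_le (H : Prof α ε w f) {C : ℝ} (hC : 0 ≤ C) (hY : YZ f w ≤ ENNReal.ofReal C) {p : ℝ} (hp : 0 < p) {r : ℝ}
    (hr : ENNReal.ofReal (2*r) = ENNReal.ofReal ε * MM f w p) : 2 * r ≤ ε * (p^2 * C) := by
  have hε := H.hε
  have h : ENNReal.ofReal (2*r) ≤ ENNReal.ofReal (ε * (p^2 * C)) := by
    rw [hr, ENNReal.ofReal_mul hε.le, ENNReal.ofReal_mul (by positivity)]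
    gcongr
    exact (H.MM_le hp).trans (by gcongr)
  exact (ENNReal.ofReal_le_ofReal_iff (by positivity)).1 h

lemma one_sub_exp_ge {u : ℝ} (hu : 0 ≤ u) : u - u^2/2 ≤ 1 - exp (-u) := by
  have := Real.quadratic_le_exp_of_nonneg hu
  have h2 : exp u * exp (-u) = 1 := by rw [← Real.exp_add]; simp
  have h3 := Real.exp_pos (-u)
  -- exp(-u) ≤ 1/(1+u+u^2/2) ≤ 1-u+u^2/2
  have h4 : exp (-u) * (1 + u + u^2/2) ≤ 1 := by nlinarith
  have h5 : (1 - u + u^2/2) * (1 + u + u^2/2) ≥ 1 := by nlinarith [sq_nonneg (u^2)]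
  have h6 : exp (-u) * (1 + u + u^2/2) ≤ (1 - u + u^2/2) * (1 + u + u^2/2) := by linarith
  have := le_of_mul_le_mul_right h6 (by positivity)
  linarith

lemma Prof.Q_ge_small (H : Prof α ε w f) {C : ℝ} (hC : 0 ≤ C) (hM : Mo f 2 ≤ ENNReal.ofReal C) {q : ℝ} (hq : 0 < q) :
    q - q^2 * C/2 ≤ Qr f q := by
  have hnn : 0 ≤ᵐ[BM f] (fun x : ℝ => x^2) := by filter_upwards with x; positivity
  have hl : ∫⁻ x, ENNReal.ofReal (x^2) ∂(BM f) ≤ ENNReal.ofReal C := by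
    refine le_of_eq_of_le ?_ hM
    unfold Mo
    refine lintegral_congr fun x => ?_
    norm_num
  have hi : Integrable (fun x => x^2) (BM f) := by
    refine ⟨by fun_prop, ?_⟩
    rw [hasFiniteIntegral_iff_ofReal hnn]
    exact hl.trans_lt ENNReal.ofReal_lt_top
  have hle : ∫ x, x^2 ∂(BM f) ≤ C := by
    rw [integral_eq_lintegral_of_nonneg_ae hnn (by fun_prop)]
    exact ENNReal.toReal_le_of_le_ofReal hC hl
  have : ∫ x, (q * x - q^2/2 * x^2) ∂(BM f) ≤ Qr f q := by
    refine integral_mono_ae ((H.int_x.const_mul q).sub (hi.const_mul _)) (H.int_u hq.le) ?_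
    filter_upwards [BM_pos (f := f)] with x hx
    have := one_sub_exp_ge (u := q * x) (by positivity)
    have e : (q*x)^2/2 = q^2/2*x^2 := by ring
    linarith
  rw [integral_sub (H.int_x.const_mul q) (hi.const_mul _), integral_const_mul, integral_const_mul, H.mean] at this
  have : q^2/2 * ∫ x, x^2 ∂(BM f) ≤ q^2/2 * C := by gcongr
  linarith

lemma Prof.Q_lower (H : Prof α ε w f) {C : ℝ} (hC : 0 ≤ C) (hM : Mo f 2 ≤ ENNReal.ofReal C)
    (hY : YZ f w ≤ ENNReal.ofReal C) {p : ℝ} (hp : 0 < p) :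
    p/(1+p) * (1 - ε * C * (1+p)^2/4) ≤ Qr f p := by
  have hε := H.hε
  set v : ℝ → ℝ := fun p => Qr f p * (1 + p⁻¹) + ε * C * (1+p)^2/4 with hv
  have hd : ∀ q, 0 < q → HasDerivAt v (Pr f q * (1 + q⁻¹) + Qr f q * (-(q^2)⁻¹) + ε * C * (1+q)/2) q := by
    intro q hq
    have h1 : HasDerivAt (fun q : ℝ => 1 + q⁻¹) (-(q^2)⁻¹) q := (hasDerivAt_inv hq.ne').const_add 1
    have h2 : HasDerivAt (fun q : ℝ => ε * C * (1+q)^2/4) (ε * C * (1+q)/2) q := by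
      have := ((((hasDerivAt_id' q).const_add 1).fun_pow 2).const_mul (ε * C)).div_const 4
      exact this.congr_deriv (by push_cast; ring)
    exact ((H.Q_deriv hq).fun_mul h1).fun_add h2
  have hmono : MonotoneOn v (Ioi 0) := by
    refine monotoneOn_of_deriv_nonneg (convex_Ioi 0) ?_ ?_ ?_
    · exact fun q hq => (hd q hq).continuousAt.continuousWithinAt
    · rw [interior_Ioi]; exact fun q hq => (hd q hq).differentiableAt.differentiableWithinAt
    · rw [interior_Ioi]; intro q hq
      have hq : 0 < q := hq
      rw [(hd q hq).deriv]
      obtain ⟨r, hr, h1, hr2⟩ := H.lap_real hq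
      have hrl := H.r_le hC hY hq hr2
      have h2 : Pr f q = (Qr f q - Qr f q^2 - r)/q := by field_simp; linarith
      have h3 : Pr f q * (1 + q⁻¹) + Qr f q * (-(q^2)⁻¹) + ε * C * (1+q)/2 =
        (Qr f q * (q - Qr f q * (1+q)) + (1+q)/2 * (ε * (q^2 * C) - 2 * r))/q^2 := by
        rw [h2]; field_simp; ring
      rw [h3]
      have hu := H.Q_upper hq
      rw [le_div_iff₀ (by linarith)] at hu
      have hQ := Prof.Q_nonneg (f := f) hq.le
      have a1 : 0 ≤ Qr f q * (q - Qr f q * (1+q)) := mul_nonneg hQ (by linarith)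
      have a2 : 0 ≤ (1+q)/2 * (ε * (q^2 * C) - 2 * r) := mul_nonneg (by linarith) (by linarith)
      positivity
  have hlim : Tendsto (fun q : ℝ => 1 - q*C/2) (𝓝[>] 0) (𝓝 1) := by
    have : Tendsto (fun q : ℝ => 1 - q*C/2) (𝓝 0) (𝓝 (1 - 0*C/2)) := Continuous.tendsto (by fun_prop) 0
    simp only [zero_mul, zero_div, sub_zero] at this
    exact this.mono_left nhdsWithin_le_nhds
  have hle : 1 ≤ v p := by
    refine le_of_tendsto hlim ?_
    have : ∀ᶠ q in 𝓝[>] (0:ℝ), q ∈ Ioo 0 p := Ioo_mem_nhdsGT hp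
    filter_upwards [this] with q hq
    refine le_trans ?_ (hmono (a := q) hq.1 hp hq.2.le)
    have hq0 := hq.1
    have h1 := H.Q_ge_small hC hM hq0
    have hQ := Prof.Q_nonneg (f := f) hq0.le
    simp only [hv]
    have h4 : Qr f q * q⁻¹ ≥ (q - q^2*C/2) * q⁻¹ := by gcongr
    have e : (q - q^2*C/2) * q⁻¹ = 1 - q*C/2 := by field_simp
    have : 0 ≤ ε * C * (1+q)^2/4 := by positivity
    linarith
  simp only [hv] at hle
  have e : Qr f p = p/(1+p) * (Qr f p * (1 + p⁻¹)) := by field_simp; ring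
  rw [e]
  gcongr
  linarith
end

section
variable {ν : ℕ → Measure ℝ} {μ : Measure ℝ}

lemma int_cont {κ : Measure ℝ} [IsFiniteMeasure κ] (hpos : ∀ᵐ x ∂κ, 0 < x) {G : ℝ → ℝ} (hG : Continuous G) :
    Integrable (fun x => G (exp (-x))) κ := by
  obtain ⟨M, hM⟩ := (isCompact_Icc (a := (0:ℝ)) (b := 1)).exists_bound_of_continuousOn hG.continuousOn
  refine Integrable.of_bound (C := M) (by fun_prop) ?_
  filter_upwards [hpos] with x hx
  exact hM _ ⟨(exp_pos _).le, Real.exp_le_one_iff.2 (by linarith)⟩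

lemma tend_poly [∀ n, IsFiniteMeasure (ν n)] [IsFiniteMeasure μ]
    (hν : ∀ n, ∀ᵐ x ∂(ν n), 0 < x) (hμ : ∀ᵐ x ∂μ, 0 < x)
    (h : ∀ k : ℕ, Tendsto (fun n => ∫ x, exp (-x)^k ∂(ν n)) atTop (𝓝 (∫ x, exp (-x)^k ∂μ))) (p : Polynomial ℝ) :
    Tendsto (fun n => ∫ x, p.eval (exp (-x)) ∂(ν n)) atTop (𝓝 (∫ x, p.eval (exp (-x)) ∂μ)) := by
  have e : ∀ (κ : Measure ℝ) [IsFiniteMeasure κ], (∀ᵐ x ∂κ, 0 < x) → ∫ x, p.eval (exp (-x)) ∂κ =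
      ∑ i ∈ Finset.range (p.natDegree + 1), p.coeff i * ∫ x, exp (-x)^i ∂κ := by
    intro κ _ hκ
    simp_rw [Polynomial.eval_eq_sum_range]
    rw [integral_finsetSum]
    · simp_rw [integral_const_mul]
    · intro i _
      exact (int_cont hκ (G := fun u => u^i) (by fun_prop)).const_mul _
  rw [e μ hμ]
  simp_rw [fun n => e (ν n) (hν n)]
  exact tendsto_finsetSum _ fun i _ => (h i).const_mul _

lemma tend_cont [∀ n, IsFiniteMeasure (ν n)] [IsFiniteMeasure μ]
    (hν : ∀ n, ∀ᵐ x ∂(ν n), 0 < x) (hμ : ∀ᵐ x ∂μ, 0 < x)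
    (h : ∀ k : ℕ, Tendsto (fun n => ∫ x, exp (-x)^k ∂(ν n)) atTop (𝓝 (∫ x, exp (-x)^k ∂μ))) {G : ℝ → ℝ} (hG : Continuous G) :
    Tendsto (fun n => ∫ x, G (exp (-x)) ∂(ν n)) atTop (𝓝 (∫ x, G (exp (-x)) ∂μ)) := by
  have key : ∀ (p : Polynomial ℝ) (η : ℝ), (∀ x ∈ Icc (0:ℝ) 1, |p.eval x - G x| < η) →
      ∀ (κ : Measure ℝ) [IsFiniteMeasure κ], (∀ᵐ x ∂κ, 0 < x) →
      |∫ x, p.eval (exp (-x)) ∂κ - ∫ x, G (exp (-x)) ∂κ| ≤ η * κ.real univ := by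
    intro p η hp κ _ hκ
    rw [← integral_sub (int_cont hκ (G := fun u => p.eval u) (by fun_prop)) (int_cont hκ hG)]
    rw [← Real.norm_eq_abs]
    refine norm_integral_le_of_norm_le_const (μ := κ) ?_
    filter_upwards [hκ] with x hx
    exact (hp _ ⟨(exp_pos _).le, Real.exp_le_one_iff.2 (by linarith)⟩).le
  have hm : Tendsto (fun n => (ν n).real univ) atTop (𝓝 (μ.real univ)) := by
    have := h 0
    simpa using this
  rw [Metric.tendsto_atTop']
  intro η hη
  set M := μ.real univ + 1 with hM
  have hM0 : 0 < M := by have : 0 ≤ μ.real univ := measureReal_nonneg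
                         linarith
  obtain ⟨p, hp⟩ := exists_polynomial_near_of_continuousOn 0 1 G hG.continuousOn (η/(4*M)) (by positivity)
  have hpt := tend_poly hν hμ h p
  have h1 := (Metric.tendsto_atTop.1 hpt (η/4) (by positivity))
  have h2 : ∀ᶠ n in atTop, (ν n).real univ < M := hm.eventually_lt_const (by linarith)
  obtain ⟨N1, hN1⟩ := h1
  obtain ⟨N2, hN2⟩ := eventually_atTop.1 h2
  refine ⟨max N1 N2, fun n hn => ?_⟩
  have a1 := hN1 n ((le_max_left _ _).trans hn.le)
  have a2 := hN2 n ((le_max_right _ _).trans hn.le)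
  have a3 := key p _ hp (ν n) (hν n)
  have a4 := key p _ hp μ hμ
  rw [Real.dist_eq] at a1 ⊢
  have b1 : η/(4*M) * (ν n).real univ ≤ η/4 := by
    calc η/(4*M) * (ν n).real univ ≤ η/(4*M) * M := by gcongr
      _ = η/4 := by field_simp
  have b2 : η/(4*M) * μ.real univ ≤ η/4 := by
    calc η/(4*M) * μ.real univ ≤ η/(4*M) * M := by gcongr; linarith
      _ = η/4 := by field_simp
  rw [abs_lt] at a1 ⊢
  rw [abs_le] at a3 a4
  constructor <;> linarith [a1.1, a1.2, a3.1, a3.2, a4.1, a4.2]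

/-- continuous step function -/
noncomputable def stp (c h u : ℝ) : ℝ := min 1 (max 0 ((u - c)/h))

lemma stp_cont (c h : ℝ) : Continuous (stp c h) := by unfold stp; fun_prop

lemma stp_nonneg (c h u : ℝ) : 0 ≤ stp c h u := le_min zero_le_one (le_max_left _ _)
lemma stp_le_one (c h u : ℝ) : stp c h u ≤ 1 := min_le_left _ _
lemma stp_zero {c h u : ℝ} (hh : 0 < h) (hu : u ≤ c) : stp c h u = 0 := by
  unfold stp
  rw [max_eq_left]; · simp
  exact div_nonpos_of_nonpos_of_nonneg (by linarith) hh.le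
lemma stp_one {c h u : ℝ} (hh : 0 < h) (hu : c + h ≤ u) : stp c h u = 1 := by
  unfold stp
  rw [min_eq_left]
  refine le_trans ?_ (le_max_right _ _)
  rw [le_div_iff₀ hh]; linarith

lemma tend_cdf [∀ n, IsFiniteMeasure (ν n)] [IsFiniteMeasure μ]
    (hν : ∀ n, ∀ᵐ x ∂(ν n), 0 < x) (hμ : ∀ᵐ x ∂μ, 0 < x)
    (h : ∀ k : ℕ, Tendsto (fun n => ∫ x, exp (-x)^k ∂(ν n)) atTop (𝓝 (∫ x, exp (-x)^k ∂μ)))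
    (hna : ∀ x, μ {x} = 0) (t : ℝ) :
    Tendsto (fun n => (ν n).real (Iio t)) atTop (𝓝 (μ.real (Iio t))) ∧
    Tendsto (fun n => (ν n).real (Iic t)) atTop (𝓝 (μ.real (Iio t))) := by
  have hs : ∀ m : ℕ, (0:ℝ) < 1/(m+1) := fun m => by positivity
  have hs0 : Tendsto (fun m : ℕ => (1:ℝ)/(m+1)) atTop (𝓝 0) := tendsto_one_div_add_atTop_nhds_zero_nat
  set c := exp (-t) with hc
  have hind : ∀ κ : Measure ℝ, ∫ x, (Iio t).indicator (fun _ => (1:ℝ)) x ∂κ = κ.real (Iio t) := by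
    intro κ; exact integral_indicator_one measurableSet_Iio
  have hind' : ∀ κ : Measure ℝ, ∫ x, (Iic t).indicator (fun _ => (1:ℝ)) x ∂κ = κ.real (Iic t) := by
    intro κ; exact integral_indicator_one measurableSet_Iic
  have hlt : ∀ x, x < t ↔ c < exp (-x) := by intro x; rw [hc, Real.exp_lt_exp]; constructor <;> intro h <;> linarith
  -- lower
  have lo : ∀ (κ : Measure ℝ) [IsFiniteMeasure κ] (_ : ∀ᵐ x ∂κ, 0 < x) (m : ℕ), ∫ x, stp c (1/(m+1)) (exp (-x)) ∂κ ≤ κ.real (Iio t) := by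
    intro κ _ hκ m
    rw [← hind]
    refine integral_mono (int_cont hκ (stp_cont _ _)) ((integrable_const (1:ℝ)).indicator measurableSet_Iio) ?_
    intro x
    by_cases hx : x < t
    · simp only [mem_Iio, hx, indicator_of_mem]; exact stp_le_one _ _ _
    · have h2 : exp (-x) ≤ c := by rw [hlt] at hx; exact not_lt.1 hx
      simp only [mem_Iio, hx, not_false_eq_true, indicator_of_notMem]
      exact (stp_zero (hs m) h2).le
  have up : ∀ (κ : Measure ℝ) [IsFiniteMeasure κ] (_ : ∀ᵐ x ∂κ, 0 < x) (m : ℕ), κ.real (Iic t) ≤ ∫ x, stp c (1/(m+1)) (exp (-x) + 1/(m+1)) ∂κ := by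
    intro κ _ hκ m
    rw [← hind']
    refine integral_mono ((integrable_const (1:ℝ)).indicator measurableSet_Iic) (int_cont hκ ((stp_cont c (1/(m+1))).comp (continuous_id.add_const (1/((m:ℝ)+1))))) ?_
    intro x
    by_cases hx : x ≤ t
    · have h2 : c ≤ exp (-x) := by rw [hc, Real.exp_le_exp]; linarith
      simp only [mem_Iic, hx, indicator_of_mem]
      rw [stp_one (hs m) (by linarith)]
    · simp only [mem_Iic, hx, not_false_eq_true, indicator_of_notMem]; exact stp_nonneg _ _ _
  have lo_lim : Tendsto (fun m : ℕ => ∫ x, stp c (1/(m+1)) (exp (-x)) ∂μ) atTop (𝓝 (μ.real (Iio t))) := by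
    rw [← hind]
    refine tendsto_integral_of_dominated_convergence (fun _ => (1:ℝ)) (fun m => ((stp_cont _ _).comp (by fun_prop)).aestronglyMeasurable) (integrable_const _) ?_ ?_
    · intro m; filter_upwards with x; rw [Real.norm_of_nonneg (stp_nonneg _ _ _)]; exact stp_le_one _ _ _
    · filter_upwards with x
      by_cases hx : x < t
      · have h2 := (hlt x).1 hx
        simp only [mem_Iio, hx, indicator_of_mem]
        refine tendsto_const_nhds.congr' ?_
        filter_upwards [hs0.eventually_lt_const (show (0:ℝ) < exp (-x) - c by linarith)] with m hm
        rw [stp_one (hs m) (by linarith)]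
      · have h2 : exp (-x) ≤ c := by rw [hlt] at hx; exact not_lt.1 hx
        simp only [mem_Iio, hx, not_false_eq_true, indicator_of_notMem]
        refine tendsto_const_nhds.congr ?_
        intro m
        rw [stp_zero (hs m) h2]
  have up_lim : Tendsto (fun m : ℕ => ∫ x, stp c (1/(m+1)) (exp (-x) + 1/(m+1)) ∂μ) atTop (𝓝 (μ.real (Iio t))) := by
    rw [← hind]
    refine tendsto_integral_of_dominated_convergence (fun _ => (1:ℝ)) (fun m => ((stp_cont _ _).comp (by fun_prop)).aestronglyMeasurable) (integrable_const _) ?_ ?_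
    · intro m; filter_upwards with x; rw [Real.norm_of_nonneg (stp_nonneg _ _ _)]; exact stp_le_one _ _ _
    · have hne : ∀ᵐ x ∂μ, x ≠ t := by
        rw [ae_iff]; simpa using hna t
      filter_upwards [hne] with x hxt
      by_cases hx : x < t
      · have h2 := (hlt x).1 hx
        simp only [mem_Iio, hx, indicator_of_mem]
        refine tendsto_const_nhds.congr ?_
        intro m
        rw [stp_one (hs m) (by linarith)]
      · have h2 : exp (-x) < c := by
          rw [hc, Real.exp_lt_exp]
          have : t < x := lt_of_le_of_ne (not_lt.1 hx) (Ne.symm hxt)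
          linarith
        simp only [mem_Iio, hx, not_false_eq_true, indicator_of_notMem]
        refine tendsto_const_nhds.congr' ?_
        filter_upwards [hs0.eventually_lt_const (show (0:ℝ) < c - exp (-x) by linarith)] with m hm
        rw [stp_zero (hs m) (by linarith)]
  have hsub : ∀ n, (ν n).real (Iio t) ≤ (ν n).real (Iic t) := fun n => measureReal_mono Iio_subset_Iic_self
  have L1 : ∀ a < μ.real (Iio t), ∀ᶠ n in atTop, a < (ν n).real (Iio t) := by
    intro a ha
    obtain ⟨m, hm⟩ := (lo_lim.eventually_const_lt ha).exists
    have := tend_cont hν hμ h (stp_cont c (1/(m+1)))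
    filter_upwards [this.eventually_const_lt hm] with n hn
    exact hn.trans_le (lo _ (hν n) m)
  have L2 : ∀ a > μ.real (Iio t), ∀ᶠ n in atTop, (ν n).real (Iic t) < a := by
    intro a ha
    obtain ⟨m, hm⟩ := (up_lim.eventually_lt_const ha).exists
    have := tend_cont hν hμ h (G := fun u => stp c (1/(m+1)) (u + 1/(m+1))) ((stp_cont c (1/(m+1))).comp (continuous_id.add_const (1/((m:ℝ)+1))))
    filter_upwards [this.eventually_lt_const hm] with n hn
    exact (up _ (hν n) m).trans_lt hn
  refine ⟨tendsto_order.2 ⟨L1, fun a ha => ?_⟩, tendsto_order.2 ⟨fun a ha => ?_, L2⟩⟩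
  · filter_upwards [L2 a ha] with n hn using (hsub n).trans_lt hn
  · filter_upwards [L1 a ha] with n hn using hn.trans_le (hsub n)
end

noncomputable def AM (f : ℝ → ℝ≥0∞) : Measure ℝ := (BM f).withDensity (fun x => ENNReal.ofReal x)
noncomputable def CM (f : ℝ → ℝ≥0∞) : Measure ℝ := Measure.conv (AM f) (BM f)

instance AM_sfinite (f : ℝ → ℝ≥0∞) : SFinite (AM f) := by unfold AM; infer_instance

section
variable {α ε : ℝ} {w : ℝ → ℝ → ℝ≥0∞} {f : ℝ → ℝ≥0∞}

lemma AM_pos : ∀ᵐ x ∂(AM f), 0 < x :=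
  (withDensity_absolutelyContinuous _ _).ae_le BM_pos

lemma Prof.finA (H : Prof α ε w f) : IsFiniteMeasure (AM f) := by
  constructor
  unfold AM
  rw [withDensity_apply _ MeasurableSet.univ, Measure.restrict_univ, H.mass]
  exact ENNReal.one_lt_top

lemma Prof.finC (H : Prof α ε w f) : IsFiniteMeasure (CM f) := by
  have := H.finA
  have := H.fin
  unfold CM; infer_instance

lemma CM_pos : ∀ᵐ x ∂(CM f), 0 < x := by
  have hm : MeasurableSet {x : ℝ | ¬ 0 < x} := by measurability
  rw [ae_iff, ← lintegral_indicator_one hm]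
  unfold CM
  rw [Measure.lintegral_conv (measurable_one.indicator hm)]
  rw [← lintegral_zero (μ := AM f)]
  refine lintegral_congr_ae ?_
  filter_upwards [AM_pos (f := f)] with x hx
  rw [← lintegral_zero (μ := BM f)]
  refine lintegral_congr_ae ?_
  filter_upwards [BM_pos (f := f)] with y hy
  have : 0 < x + y := by linarith
  simp [this]

lemma exp_pow_eq (x : ℝ) (k : ℕ) : exp (-x)^k = exp (-((k:ℝ)*x)) := by
  rw [← Real.exp_nat_mul]; congr 1; ring

lemma Prof.lapB (H : Prof α ε w f) (k : ℕ) : ∫ x, exp (-x)^k ∂(BM f) = (BM f).real univ - Qr f k := by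
  have := H.fin
  unfold Qr
  have hi : Integrable (fun x : ℝ => exp (-x)^k) (BM f) := int_cont BM_pos (G := fun u => u^k) (by fun_prop)
  have e : ∫ x, (1 - exp (-((k:ℝ)*x))) ∂(BM f) = ∫ x, (1:ℝ) - exp (-x)^k ∂(BM f) := by
    simp_rw [exp_pow_eq]
  rw [e, integral_sub (integrable_const _) hi]
  simp

lemma Prof.lapA (_H : Prof α ε w f) (k : ℕ) : ∫ x, exp (-x)^k ∂(AM f) = Pr f k := by
  unfold AM Pr
  rw [integral_withDensity_eq_integral_toReal_smul (by fun_prop) (by simp)]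
  refine integral_congr_ae ?_
  filter_upwards [BM_pos (f := f)] with x hx
  rw [ENNReal.toReal_ofReal hx.le, smul_eq_mul, exp_pow_eq]

lemma Prof.lapC (H : Prof α ε w f) (k : ℕ) : ∫ x, exp (-x)^k ∂(CM f) =
    (∫ x, exp (-x)^k ∂(AM f)) * ∫ x, exp (-x)^k ∂(BM f) := by
  have := H.finC
  have hi : Integrable (fun x : ℝ => exp (-x)^k) (CM f) := int_cont CM_pos (G := fun u => u^k) (by fun_prop)
  unfold CM at hi ⊢
  rw [integral_conv hi]
  simp_rw [neg_add, Real.exp_add, mul_pow, integral_const_mul, integral_mul_const]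

end

section
variable {α : ℝ} {ε : ℕ → ℝ} {w : ℕ → ℝ → ℝ → ℝ≥0∞} {f : ℕ → ℝ → ℝ≥0∞}

lemma tend_QP (H : ∀ n, Prof α (ε n) (w n) (f n)) (hε : Tendsto ε atTop (𝓝 0)) {p : ℝ} (hp : 0 < p) :
    Tendsto (fun n => Qr (f n) p) atTop (𝓝 (p/(1+p))) ∧ Tendsto (fun n => Pr (f n) p) atTop (𝓝 (1/(1+p)^2)) := by
  have hα := (H 0).hα
  obtain ⟨C1, hC1, h1⟩ := Mo_bound hα (t := 2) (by norm_num)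
  obtain ⟨C2, hC2, h2⟩ := YZ_bound hα
  set C := max C1 C2
  have hC : 0 ≤ C := hC1.trans (le_max_left _ _)
  have hM : ∀ n, Mo (f n) 2 ≤ ENNReal.ofReal C := fun n =>
    (h1 _ _ _ (H n)).trans (ENNReal.ofReal_le_ofReal (le_max_left _ _))
  have hY : ∀ n, YZ (f n) (w n) ≤ ENNReal.ofReal C := fun n =>
    (h2 _ _ _ (H n)).trans (ENNReal.ofReal_le_ofReal (le_max_right _ _))
  have hQ : Tendsto (fun n => Qr (f n) p) atTop (𝓝 (p/(1+p))) := by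
    refine tendsto_of_tendsto_of_tendsto_of_le_of_le (g := fun n => p/(1+p) * (1 - ε n * C * (1+p)^2/4)) ?_ tendsto_const_nhds
      (fun n => (H n).Q_lower hC (hM n) (hY n) hp) (fun n => (H n).Q_upper hp)
    have : Tendsto (fun n => p/(1+p) * (1 - ε n * C * (1+p)^2/4)) atTop (𝓝 (p/(1+p) * (1 - 0 * C * (1+p)^2/4))) :=
      ((((hε.mul_const _).mul_const _).div_const _).const_sub _).const_mul _
    simpa using this
  refine ⟨hQ, ?_⟩
  choose r hr0 hr1 hr2 using fun n => (H n).lap_real hp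
  have hr : Tendsto r atTop (𝓝 0) := by
    refine tendsto_of_tendsto_of_tendsto_of_le_of_le (h := fun n => ε n * (p^2*C)/2) tendsto_const_nhds ?_ hr0 ?_
    · have := (hε.mul_const (p^2*C)).div_const 2
      simpa using this
    · intro n
      have := (H n).r_le hC (hY n) hp (hr2 n)
      simp only; linarith
  have e : ∀ n, Pr (f n) p = (Qr (f n) p - Qr (f n) p^2 - r n)/p := by
    intro n; have := hr1 n; field_simp; linarith
  simp_rw [e]
  have : Tendsto (fun n => (Qr (f n) p - Qr (f n) p^2 - r n)/p) atTop (𝓝 ((p/(1+p) - (p/(1+p))^2 - 0)/p)) :=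
    ((hQ.sub (hQ.pow 2)).sub hr).div_const _
  convert this using 2
  field_simp; ring

lemma tend_N (H : ∀ n, Prof α (ε n) (w n) (f n)) (hε : Tendsto ε atTop (𝓝 0)) :
    Tendsto (fun n => (BM (f n)).real univ) atTop (𝓝 1) := by
  refine tendsto_order.2 ⟨fun a ha => ?_, fun a ha => ?_⟩
  · have hl : Tendsto (fun p : ℝ => p/(1+p)) atTop (𝓝 1) := by
      have : Tendsto (fun p : ℝ => 1 - 1/(1+p)) atTop (𝓝 (1 - 0)) := by
        refine Tendsto.const_sub _ ?_
        exact tendsto_const_nhds.div_atTop (tendsto_atTop_add_const_left _ _ tendsto_id)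
      rw [sub_zero] at this
      refine this.congr' ?_
      filter_upwards [eventually_gt_atTop 0] with p hp
      field_simp; ring
    obtain ⟨p, hp1, hp⟩ := ((hl.eventually_const_lt ha).and (eventually_gt_atTop 0)).exists
    filter_upwards [(tend_QP H hε hp).1.eventually_const_lt hp1] with n hn
    refine hn.trans_le ?_
    have := (H n).fin
    have h1 : Qr (f n) p ≤ ∫ x, (1:ℝ) ∂(BM (f n)) := by
      refine integral_mono ((H n).int_u hp.le) (integrable_const _) ?_
      intro x; have := exp_pos (-(p*x)); simp only; linarith
    simpa using h1
  · filter_upwards with n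
    refine lt_of_le_of_lt ?_ ha
    exact ENNReal.toReal_le_of_le_ofReal zero_le_one (by simpa using (H n).N_le)

lemma tend_lapB (H : ∀ n, Prof α (ε n) (w n) (f n)) (hε : Tendsto ε atTop (𝓝 0)) (k : ℕ) :
    Tendsto (fun n => ∫ x, exp (-x)^k ∂(BM (f n))) atTop (𝓝 (1/(1+k))) := by
  simp_rw [fun n => (H n).lapB k]
  rcases Nat.eq_zero_or_pos k with rfl | hk
  · have : ∀ n, Qr (f n) ((0:ℕ):ℝ) = 0 := by intro n; unfold Qr; simp
    simp_rw [this]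
    simpa using tend_N H hε
  · have hk' : (0:ℝ) < k := by exact_mod_cast hk
    have := (tend_N H hε).sub (tend_QP H hε hk').1
    convert this using 2
    field_simp; ring

lemma tend_lapA (H : ∀ n, Prof α (ε n) (w n) (f n)) (hε : Tendsto ε atTop (𝓝 0)) (k : ℕ) :
    Tendsto (fun n => ∫ x, exp (-x)^k ∂(AM (f n))) atTop (𝓝 (1/(1+k)^2)) := by
  simp_rw [fun n => (H n).lapA k]
  rcases Nat.eq_zero_or_pos k with rfl | hk
  · have : ∀ n, Pr (f n) ((0:ℕ):ℝ) = 1 := by intro n; unfold Pr; simp [(H n).mean]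
    simp_rw [this]
    simp
  · have hk' : (0:ℝ) < k := by exact_mod_cast hk
    exact (tend_QP H hε hk').2

lemma tend_lapC (H : ∀ n, Prof α (ε n) (w n) (f n)) (hε : Tendsto ε atTop (𝓝 0)) (k : ℕ) :
    Tendsto (fun n => ∫ x, exp (-x)^k ∂(CM (f n))) atTop (𝓝 (1/(1+k)^3)) := by
  simp_rw [fun n => (H n).lapC k]
  have := (tend_lapA H hε k).mul (tend_lapB H hε k)
  convert this using 2
  field_simp
end

/-- gamma type limit densities -/
noncomputable def gd (j : ℕ) (x : ℝ) : ℝ≥0∞ := ENNReal.ofReal (x^j/(j.factorial) * exp (-x))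

lemma gd_meas (j : ℕ) : Measurable (gd j) := by unfold gd; fun_prop

lemma gd_int (j : ℕ) : IntegrableOn (fun x : ℝ => x^j/(j.factorial) * exp (-x)) (Ioi 0) := by
  have := Real.GammaIntegral_convergent (s := j+1) (by positivity)
  refine (this.div_const (j.factorial : ℝ)).congr ?_
  filter_upwards with x
  rw [add_sub_cancel_right, Real.rpow_natCast]; ring

instance gd_fin (j : ℕ) : IsFiniteMeasure (BM (gd j)) := by
  constructor
  unfold BM
  rw [withDensity_apply _ MeasurableSet.univ, Measure.restrict_univ]
  exact (gd_int j).lintegral_lt_top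

lemma gd_lap (j k : ℕ) : ∫ x, exp (-x)^k ∂(BM (gd j)) = 1/(1+k)^(j+1) := by
  unfold BM
  rw [integral_withDensity_eq_integral_toReal_smul (gd_meas j) (by simp [gd])]
  have e : ∫ x in Ioi (0:ℝ), (gd j x).toReal • exp (-x)^k = ∫ x in Ioi (0:ℝ), (1/(j.factorial:ℝ)) * (x^(((j:ℝ)+1)-1) * exp (-((1+(k:ℝ))*x))) := by
    refine setIntegral_congr_fun measurableSet_Ioi ?_
    intro x hx
    have hx : 0 < x := hx
    simp only [gd]
    rw [ENNReal.toReal_ofReal (by positivity), smul_eq_mul, exp_pow_eq, add_sub_cancel_right, Real.rpow_natCast,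
      show -((1+(k:ℝ))*x) = -x + -((k:ℝ)*x) by ring, Real.exp_add]
    ring
  rw [e, integral_const_mul, Real.integral_rpow_mul_exp_neg_mul_Ioi (by positivity) (by positivity), Real.Gamma_nat_eq_factorial]
  have : ((1:ℝ)/(1+k))^((j:ℝ)+1) = (1/(1+k))^(j+1) := by
    rw [← Real.rpow_natCast]; push_cast; rfl
  rw [this]
  have : (j.factorial : ℝ) ≠ 0 := by positivity
  rw [one_div_pow]
  field_simp

lemma gd_atom (j : ℕ) (x : ℝ) : BM (gd j) {x} = 0 := by
  have h : BM (gd j) ≪ volume := (withDensity_absolutelyContinuous _ _).trans Measure.restrict_le_self.absolutelyContinuous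
  exact h (by simp)

lemma gd_cdf (j : ℕ) {F : ℝ → ℝ} (hF : ∀ x, HasDerivAt F (x^j/(j.factorial) * exp (-x)) x) {t : ℝ} (ht : 0 < t) :
    (BM (gd j)).real (Iio t) = F t - F 0 := by
  have h := lint_Ioo (F := F) ht.le (fun x _ => hF x) (by fun_prop) (fun x hx => by have := hx.1; positivity)
  unfold Measure.real BM
  rw [withDensity_apply _ measurableSet_Iio, Measure.restrict_restrict measurableSet_Iio]
  have : Iio t ∩ Ioi 0 = Ioo 0 t := by ext x; simp [and_comm]
  rw [this]
  unfold gd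
  rw [h.1, ENNReal.toReal_ofReal h.2]

lemma gd_cdf0 {t : ℝ} (ht : 0 < t) : (BM (gd 0)).real (Iio t) = 1 - exp (-t) := by
  rw [gd_cdf 0 (F := fun x => - exp (-x)) ?_ ht]
  · simp; ring
  · intro x
    exact ((hasDerivAt_id' x).fun_neg.exp).fun_neg.congr_deriv (by simp)

lemma gd_cdf1 {t : ℝ} (ht : 0 < t) : (BM (gd 1)).real (Iio t) = 1 - (1+t) * exp (-t) := by
  rw [gd_cdf 1 (F := fun x => - ((1+x) * exp (-x))) ?_ ht]
  · simp; ring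
  · intro x
    exact (((hasDerivAt_id' x).const_add 1).fun_mul (hasDerivAt_id' x).fun_neg.exp).fun_neg.congr_deriv (by simp; ring)

lemma gd_cdf2 {t : ℝ} (ht : 0 < t) : (BM (gd 2)).real (Iio t) = 1 - (1+t+t^2/2) * exp (-t) := by
  rw [gd_cdf 2 (F := fun x => - ((1+x+x^2/2) * exp (-x))) ?_ ht]
  · simp; ring
  · intro x
    exact ((((hasDerivAt_id' x).const_add 1).fun_add (((hasDerivAt_id' x).fun_pow 2).div_const 2)).fun_mul (hasDerivAt_id' x).fun_neg.exp).fun_neg.congr_deriv (by simp; ring)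

section
variable {α ε : ℝ} {w : ℝ → ℝ → ℝ≥0∞} {f : ℝ → ℝ≥0∞}

lemma meas_ind2 {k : ℝ → ℝ → ℝ≥0∞} (hk : Measurable (fun p : ℝ × ℝ => k p.1 p.2)) (x : ℝ) :
    Measurable (fun q : ℝ × ℝ => (Ioo q.1 (q.1+q.2)).indicator (fun _ => ENNReal.ofReal q.1 * k q.1 q.2) x) :=
  (meas_ind hk).comp ((measurable_const (a := x)).prodMk measurable_id)

lemma Reg_add (H : Prof α ε w f) (x : ℝ) : Reg f (fun y z => 2 + ENNReal.ofReal ε * w y z) x =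
    Reg f (fun _ _ => 2) x + ENNReal.ofReal ε * Reg f w x := by
  have m1 := meas_ind2 (k := fun _ _ => 2) measurable_const x
  have m2 := meas_ind2 H.mw x
  unfold Reg
  rw [← lintegral_const_mul _ m2.lintegral_prod_right', ← lintegral_add_left m1.lintegral_prod_right']
  refine lintegral_congr fun y => ?_
  have m1' : Measurable (fun z => (Ioo y (y+z)).indicator (fun _ => ENNReal.ofReal y * 2) x) :=
    m1.comp ((measurable_const (a := y)).prodMk measurable_id)
  have m2' : Measurable (fun z => (Ioo y (y+z)).indicator (fun _ => ENNReal.ofReal y * w y z) x) :=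
    m2.comp ((measurable_const (a := y)).prodMk measurable_id)
  rw [← lintegral_const_mul _ m2', ← lintegral_add_left m1']
  refine lintegral_congr fun z => ?_
  by_cases hx : x ∈ Ioo y (y+z)
  · simp only [hx, indicator_of_mem]; ring
  · simp only [hx, not_false_eq_true, indicator_of_notMem]; simp

lemma CM_Iic (x : ℝ) : CM f (Iic x) = ∫⁻ y, ∫⁻ z, ENNReal.ofReal y * (Iic x).indicator 1 (y+z) ∂(BM f) ∂(BM f) := by
  rw [← lintegral_indicator_one measurableSet_Iic]
  unfold CM
  have m : Measurable ((Iic x).indicator (1 : ℝ → ℝ≥0∞)) := measurable_one.indicator measurableSet_Iic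
  rw [Measure.lintegral_conv m]
  unfold AM
  have m2 : Measurable (fun q : ℝ × ℝ => (Iic x).indicator (1 : ℝ → ℝ≥0∞) (q.1 + q.2)) := m.comp (by fun_prop)
  rw [lintegral_withDensity_eq_lintegral_mul _ (by fun_prop) m2.lintegral_prod_right']
  refine lintegral_congr fun y => ?_
  have m3 : Measurable (fun z => (Iic x).indicator (1 : ℝ → ℝ≥0∞) (y + z)) := m.comp (by fun_prop)
  rw [lintegral_const_mul _ m3]
  rfl

lemma AM_Iio (x : ℝ) : BM f univ * AM f (Iio x) = ∫⁻ y, ∫⁻ _z, ENNReal.ofReal y * (Iio x).indicator 1 y ∂(BM f) ∂(BM f) := by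
  unfold AM
  rw [withDensity_apply _ measurableSet_Iio, ← lintegral_indicator measurableSet_Iio]
  simp_rw [lintegral_const]
  have m : Measurable ((Iio x).indicator (1 : ℝ → ℝ≥0∞)) := measurable_one.indicator measurableSet_Iio
  rw [lintegral_mul_const _ (by fun_prop), mul_comm]
  congr 1
  refine lintegral_congr fun y => ?_
  by_cases h : y ∈ Iio x <;> simp [indicator, h]

lemma S_eq (x : ℝ) : Reg f (fun _ _ => 2) x + 2 * CM f (Iic x) = 2 * (BM f univ * AM f (Iio x)) := by
  have m1 := meas_ind2 (k := fun _ _ => 2) measurable_const x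
  have m : Measurable ((Iic x).indicator (1 : ℝ → ℝ≥0∞)) := measurable_one.indicator measurableSet_Iic
  have m' : Measurable ((Iio x).indicator (1 : ℝ → ℝ≥0∞)) := measurable_one.indicator measurableSet_Iio
  have m2 : Measurable (fun q : ℝ × ℝ => ENNReal.ofReal q.1 * (Iic x).indicator (1 : ℝ → ℝ≥0∞) (q.1 + q.2)) :=
    (ENNReal.measurable_ofReal.comp measurable_fst).mul (m.comp (by fun_prop))
  have m3 : Measurable (fun q : ℝ × ℝ => ENNReal.ofReal q.1 * (Iio x).indicator (1 : ℝ → ℝ≥0∞) q.1) :=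
    (ENNReal.measurable_ofReal.comp measurable_fst).mul (m'.comp (by fun_prop))
  rw [CM_Iic, AM_Iio]
  unfold Reg
  rw [← lintegral_const_mul _ m2.lintegral_prod_right', ← lintegral_const_mul _ m3.lintegral_prod_right', ← lintegral_add_left m1.lintegral_prod_right']
  refine lintegral_congr_ae ?_
  filter_upwards [BM_pos (f := f)] with y hy
  have m1' : Measurable (fun z => (Ioo y (y+z)).indicator (fun _ => ENNReal.ofReal y * 2) x) :=
    m1.comp ((measurable_const (a := y)).prodMk measurable_id)
  have m2' : Measurable (fun z => ENNReal.ofReal y * (Iic x).indicator (1 : ℝ → ℝ≥0∞) (y + z)) :=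
    m2.comp ((measurable_const (a := y)).prodMk measurable_id)
  have m3' : Measurable (fun _z : ℝ => ENNReal.ofReal y * (Iio x).indicator (1 : ℝ → ℝ≥0∞) y) := measurable_const
  rw [← lintegral_const_mul _ m2', ← lintegral_const_mul _ m3', ← lintegral_add_left m1']
  refine lintegral_congr_ae ?_
  filter_upwards [BM_pos (f := f)] with z hz
  by_cases h1 : y < x
  · by_cases h2 : y + z ≤ x
    · simp [indicator, h1, h2, not_lt.2 h2]
    · simp [indicator, h1, h2, not_le.1 h2, mul_comm]
  · have h2 : ¬ (y + z ≤ x) := by linarith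
    simp [indicator, h1, h2]

lemma Prof.S_real (H : Prof α ε w f) (x : ℝ) : Reg f (fun _ _ => 2) x ≤ 2 ∧
    (Reg f (fun _ _ => 2) x).toReal = 2 * ((BM f).real univ * (AM f).real (Iio x)) - 2 * (CM f).real (Iic x) := by
  have := H.fin
  have := H.finA
  have := H.finC
  have h := S_eq (f := f) x
  have hA : AM f (Iio x) ≤ 1 := by
    refine (measure_mono (subset_univ _)).trans ?_
    unfold AM
    rw [withDensity_apply _ MeasurableSet.univ, Measure.restrict_univ, H.mass]
  have hle : Reg f (fun _ _ => 2) x ≤ 2 := by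
    calc Reg f (fun _ _ => 2) x ≤ Reg f (fun _ _ => 2) x + 2 * CM f (Iic x) := le_self_add
      _ = 2 * (BM f univ * AM f (Iio x)) := h
      _ ≤ 2 * (1 * 1) := by gcongr; exact H.N_le
      _ = 2 := by simp
  refine ⟨hle, ?_⟩
  have h2 := congrArg ENNReal.toReal h
  rw [ENNReal.toReal_add (ne_top_of_le_ne_top (by simp) hle) (ENNReal.mul_ne_top (by simp) (measure_ne_top _ _)),
    ENNReal.toReal_mul, ENNReal.toReal_mul, ENNReal.toReal_mul] at h2
  simp only [ENNReal.toReal_ofNat] at h2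
  unfold Measure.real
  linarith

lemma Prof.E_int (H : Prof α ε w f) : ∫⁻ x in Ioi (0:ℝ), Reg f w x = YZ f w := by
  have := Reg_test (f := f) H.mw (h := fun _ => 1) measurable_const
  simp only [one_mul] at this
  rw [this]
  unfold YZ
  refine lintegral_congr fun y => lintegral_congr fun z => ?_
  simp; ring
end

/-- distance density -/
noncomputable def dd (f : ℝ → ℝ≥0∞) (x : ℝ) : ℝ≥0∞ := ENNReal.ofReal |(f x).toReal - exp (-x)|

section
variable {α : ℝ} {ε : ℕ → ℝ} {w : ℕ → ℝ → ℝ → ℝ≥0∞} {f : ℕ → ℝ → ℝ≥0∞}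

lemma tend_B (H : ∀ n, Prof α (ε n) (w n) (f n)) (hε : Tendsto ε atTop (𝓝 0)) {x : ℝ} (hx : 0 < x) :
    Tendsto (fun n => (BM (f n)).real (Iic x)) atTop (𝓝 (1 - exp (-x))) := by
  have := fun n => (H n).fin
  rw [← gd_cdf0 hx]
  refine (tend_cdf (fun n => BM_pos) BM_pos (fun k => ?_) (gd_atom 0) x).2
  rw [gd_lap]; simpa using tend_lapB H hε k

lemma tend_S (H : ∀ n, Prof α (ε n) (w n) (f n)) (hε : Tendsto ε atTop (𝓝 0)) {x : ℝ} (hx : 0 < x) :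
    Tendsto (fun n => (Reg (f n) (fun _ _ => 2) x).toReal) atTop (𝓝 (x^2 * exp (-x))) := by
  have := fun n => (H n).finA
  have := fun n => (H n).finC
  simp_rw [fun n => ((H n).S_real x).2]
  have h1 : Tendsto (fun n => (AM (f n)).real (Iio x)) atTop (𝓝 (1 - (1+x) * exp (-x))) := by
    rw [← gd_cdf1 hx]
    refine (tend_cdf (fun n => AM_pos) BM_pos (fun k => ?_) (gd_atom 1) x).1
    rw [gd_lap]; exact tend_lapA H hε k
  have h2 : Tendsto (fun n => (CM (f n)).real (Iic x)) atTop (𝓝 (1 - (1+x+x^2/2) * exp (-x))) := by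
    rw [← gd_cdf2 hx]
    refine (tend_cdf (fun n => CM_pos) BM_pos (fun k => ?_) (gd_atom 2) x).2
    rw [gd_lap]; exact tend_lapC H hε k
  have := (((tend_N H hε).mul h1).const_mul 2).sub (h2.const_mul 2)
  convert this using 2
  ring

lemma sq_exp_le {x : ℝ} (hx : 0 ≤ x) : x^2 * exp (-x) ≤ 2 := by
  have := Real.quadratic_le_exp_of_nonneg hx
  have h2 : exp x * exp (-x) = 1 := by rw [← Real.exp_add]; simp
  have h3 := Real.exp_pos (-x)
  nlinarith

lemma tend_S_L1 (H : ∀ n, Prof α (ε n) (w n) (f n)) (hε : Tendsto ε atTop (𝓝 0)) (R : ℝ) :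
    Tendsto (fun n => ∫⁻ x in Ioc 0 R, ENNReal.ofReal |(Reg (f n) (fun _ _ => 2) x).toReal - x^2 * exp (-x)|) atTop (𝓝 0) := by
  have e : (0:ℝ≥0∞) = ∫⁻ x in Ioc 0 R, (fun _ => 0) x := by simp
  rw [e]
  refine tendsto_lintegral_of_dominated_convergence (fun _ => 4) ?_ ?_ ?_ ?_
  · intro n
    have m : Measurable (Reg (f n) (fun _ _ => 2)) := meas_Reg measurable_const
    fun_prop
  · intro n
    filter_upwards [ae_restrict_mem measurableSet_Ioc] with x hx
    have h1 : (Reg (f n) (fun _ _ => 2) x).toReal ≤ 2 := ENNReal.toReal_le_of_le_ofReal (by norm_num) (by simpa using ((H n).S_real x).1)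
    have h0 : 0 ≤ (Reg (f n) (fun _ _ => 2) x).toReal := ENNReal.toReal_nonneg
    have h2 := sq_exp_le hx.1.le
    have h3 : 0 ≤ x^2 * exp (-x) := by positivity
    have e4 : (4:ℝ≥0∞) = ENNReal.ofReal 4 := by simp
    rw [e4]
    refine ENNReal.ofReal_le_ofReal ?_
    rw [abs_le]; constructor <;> linarith
  · simp; exact ENNReal.mul_ne_top (by simp) (by simp)
  · filter_upwards [ae_restrict_mem measurableSet_Ioc] with x hx
    have := (((tend_S H hε hx.1).sub_const (x^2 * exp (-x))).abs)
    have := ENNReal.tendsto_ofReal this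
    simpa using this

lemma tend_mid (H : ∀ n, Prof α (ε n) (w n) (f n)) (hf : ∀ n x, f n x ≠ ∞) (hε : Tendsto ε atTop (𝓝 0)) (R : ℝ) :
    Tendsto (fun n => ∫⁻ x in Ioc 0 R, ENNReal.ofReal (x^2) * dd (f n) x) atTop (𝓝 0) := by
  obtain ⟨C, hC, hY⟩ := YZ_bound (H 0).hα
  have hb : Tendsto (fun n => ENNReal.ofReal (ε n * C)) atTop (𝓝 0) := by
    have := ENNReal.tendsto_ofReal (hε.mul_const C)
    simpa using this
  have hsum := (tend_S_L1 H hε R).add hb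
  rw [add_zero] at hsum
  refine tendsto_of_tendsto_of_tendsto_of_le_of_le tendsto_const_nhds hsum (fun n => zero_le) ?_
  intro n
  have hsub : Ioc (0:ℝ) R ⊆ Ioi 0 := fun x hx => hx.1
  have heq := ae_restrict_of_ae_restrict_of_subset hsub (H n).eq
  have m : Measurable (Reg (f n) (fun _ _ => 2)) := meas_Reg measurable_const
  have mE : Measurable (Reg (f n) (w n)) := meas_Reg (H n).mw
  calc ∫⁻ x in Ioc 0 R, ENNReal.ofReal (x^2) * dd (f n) x
      ≤ ∫⁻ x in Ioc 0 R, ENNReal.ofReal |(Reg (f n) (fun _ _ => 2) x).toReal - x^2 * exp (-x)| + ENNReal.ofReal (ε n) * Reg (f n) (w n) x := by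
        refine lintegral_mono_ae ?_
        filter_upwards [heq] with x hx
        rw [Reg_add (H n)] at hx
        have hlt : ENNReal.ofReal (x^2) * f n x ≠ ∞ := ENNReal.mul_ne_top (by simp) (hf n x)
        have h1 : Reg (f n) (fun _ _ => 2) x ≠ ∞ := by
          intro h; rw [hx, h] at hlt; simp at hlt
        have h2 : ENNReal.ofReal (ε n) * Reg (f n) (w n) x ≠ ∞ := by
          intro h; rw [hx, h] at hlt; simp at hlt
        have h3 := congrArg ENNReal.toReal hx
        rw [ENNReal.toReal_add h1 h2, ENNReal.toReal_mul, ENNReal.toReal_ofReal (by positivity)] at h3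
        set s := (Reg (f n) (fun _ _ => 2) x).toReal
        set t := (ENNReal.ofReal (ε n) * Reg (f n) (w n) x).toReal with ht
        have ht0 : 0 ≤ t := ENNReal.toReal_nonneg
        rw [← ENNReal.ofReal_toReal h2, ← ht, ← ENNReal.ofReal_add (abs_nonneg _) ht0]
        unfold dd
        rw [← ENNReal.ofReal_mul (by positivity)]
        refine ENNReal.ofReal_le_ofReal ?_
        calc x^2 * |(f n x).toReal - exp (-x)| = |x^2 * ((f n x).toReal - exp (-x))| := by
              rw [abs_mul, abs_of_nonneg (sq_nonneg x)]
          _ = |(s - x^2 * exp (-x)) + t| := by rw [mul_sub, h3]; congr 1; ring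
          _ ≤ |s - x^2 * exp (-x)| + |t| := abs_add_le _ _
          _ = _ := by rw [abs_of_nonneg ht0]
    _ = (∫⁻ x in Ioc 0 R, ENNReal.ofReal |(Reg (f n) (fun _ _ => 2) x).toReal - x^2 * exp (-x)|) + ENNReal.ofReal (ε n) * ∫⁻ x in Ioc 0 R, Reg (f n) (w n) x := by
        rw [lintegral_add_left (by fun_prop), lintegral_const_mul _ mE]
    _ ≤ _ := by
        refine add_le_add le_rfl ?_
        rw [ENNReal.ofReal_mul (H n).hε.le]
        gcongr
        exact ((lintegral_mono_set hsub).trans_eq (H n).E_int).trans (hY _ _ _ (H n))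
end

section
variable {α ε : ℝ} {w : ℝ → ℝ → ℝ≥0∞} {f : ℝ → ℝ≥0∞}

lemma Prof.neg_s (H : Prof α ε w f) {c x0 θ s : ℝ} (hc : c < 0) (hx0 : 0 < x0) (hθ : 0 < θ)
    (hθc : 1 - c < 2 * θ) (hB : ENNReal.ofReal θ ≤ BM f (Ioi x0)) (hs : 0 < s) :
    ∫⁻ x in Ioo s x0, ENNReal.ofReal (x^c) ∂(BM f) ≤ ENNReal.ofReal ((2*θ/(1-c)) * x0^(c-1)/(2*θ/(1-c) - 1)) := by
  have := H.fin
  have h1c : 0 < 1 - c := by linarith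
  set κ := 2*θ/(1-c) with hκ
  have hκ1 : 1 < κ := by rw [hκ, lt_div_iff₀ h1c]; linarith
  set J := ∫⁻ x in Ioo s x0, ENNReal.ofReal (x^c) ∂(BM f) with hJ
  have hJfin : J ≠ ∞ := by
    refine ne_top_of_le_ne_top (b := ENNReal.ofReal (s^c) * BM f univ) (ENNReal.mul_ne_top (by simp) (measure_ne_top _ _)) ?_
    calc J ≤ ∫⁻ x in Ioo s x0, ENNReal.ofReal (s^c) ∂(BM f) := by
          refine setLIntegral_mono measurable_const ?_
          intro x hx
          exact ENNReal.ofReal_le_ofReal (Real.rpow_le_rpow_of_nonpos hs hx.1.le hc.le)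
      _ ≤ _ := by rw [setLIntegral_const]; gcongr; exact subset_univ _
  have mh : Measurable ((Ioo s x0).indicator (fun x => ENNReal.ofReal (x^(c-2)))) :=
    Measurable.indicator (by fun_prop) measurableSet_Ioo
  have hm := H.master mh
  have hL : ∫⁻ x, ENNReal.ofReal (x^2) * (Ioo s x0).indicator (fun x => ENNReal.ofReal (x^(c-2))) x ∂(BM f) = J := by
    rw [hJ, ← lintegral_indicator measurableSet_Ioo]
    refine lintegral_congr_ae ?_
    filter_upwards [BM_pos (f := f)] with x hx
    by_cases h : x ∈ Ioo s x0
    · simp only [h, indicator_of_mem]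
      rw [← ENNReal.ofReal_mul (by positivity)]
      congr 1
      rw [← Real.rpow_natCast, ← Real.rpow_add hx]
      congr 1; push_cast; ring
    · simp [h]
  rw [hL] at hm
  -- lower bound of the right hand side
  have hin : ∀ y z, y ∈ Ioo s x0 → z ∈ Ioi x0 → ENNReal.ofReal y * (∫⁻ x in Ioo y (y+z), (Ioo s x0).indicator (fun x => ENNReal.ofReal (x^(c-2))) x)
      = ENNReal.ofReal ((y^c - y * x0^(c-1))/(1-c)) ∧ 0 ≤ (y^c - y * x0^(c-1))/(1-c) := by
    intro y z hy hz
    have hy0 : 0 < y := hs.trans hy.1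
    have hz : x0 < z := hz
    have hl := lint_Ioo (F := fun x => -(x^(c-1)/(1-c))) (h := fun x => x^(c-2)) (a := y) (b := x0) hy.2.le
        (fun x hx => by
          have hx0 : 0 < x := by linarith [hx.1]
          have := ((Real.hasDerivAt_rpow_const (x := x) (p := c-1) (Or.inl hx0.ne')).div_const (1-c)).fun_neg
          refine this.congr_deriv ?_
          rw [show c - 1 - 1 = c - 2 by ring]; field_simp; ring)
        (fun x hx => by
          have hx0 : 0 < x := by linarith [hx.1]
          exact (Real.continuousAt_rpow_const _ _ (Or.inl hx0.ne')).continuousWithinAt)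
        (fun x hx => by
          have hx0 : 0 < x := by linarith [hx.1]
          positivity)
    have e : (y^c - y * x0^(c-1))/(1-c) = y * (-(x0^(c-1)/(1-c)) - -(y^(c-1)/(1-c))) := by
      have : y^c = y * y^(c-1) := by rw [Real.rpow_sub_one hy0.ne']; field_simp
      rw [this]; ring
    rw [e]
    refine ⟨?_, mul_nonneg hy0.le hl.2⟩
    rw [ENNReal.ofReal_mul hy0.le, ← hl.1, setLIntegral_indicator measurableSet_Ioo]
    congr 3
    ext x; simp only [mem_inter_iff, mem_Ioo]
    constructor
    · rintro ⟨⟨h1, h2⟩, h3, h4⟩; exact ⟨h3, h2⟩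
    · rintro ⟨h1, h2⟩; exact ⟨⟨hy.1.trans h1, h2⟩, h1, by linarith⟩
  have hlow : ENNReal.ofReal κ * (∫⁻ y in Ioo s x0, ENNReal.ofReal (y^c - y * x0^(c-1)) ∂(BM f)) ≤ J := by
    calc ENNReal.ofReal κ * (∫⁻ y in Ioo s x0, ENNReal.ofReal (y^c - y * x0^(c-1)) ∂(BM f))
        = ∫⁻ y in Ioo s x0, ENNReal.ofReal (2/(1-c)) * ENNReal.ofReal (y^c - y * x0^(c-1)) * ENNReal.ofReal θ ∂(BM f) := by
          rw [← lintegral_const_mul _ (by fun_prop)]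
          refine lintegral_congr fun y => ?_
          have : κ = 2/(1-c) * θ := by rw [hκ]; ring
          rw [this, ENNReal.ofReal_mul (by positivity)]; ring
      _ ≤ ∫⁻ y in Ioo s x0, ENNReal.ofReal (2/(1-c)) * ENNReal.ofReal (y^c - y * x0^(c-1)) * BM f (Ioi x0) ∂(BM f) := by
          gcongr
      _ ≤ ∫⁻ y in Ioo s x0, ∫⁻ z, ENNReal.ofReal y * (2 + ENNReal.ofReal ε * w y z) *
        (∫⁻ x in Ioo y (y+z), (Ioo s x0).indicator (fun x => ENNReal.ofReal (x^(c-2))) x ∂volume) ∂(BM f) ∂(BM f) := by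
          refine setLIntegral_mono_ae' measurableSet_Ioo ?_
          filter_upwards with y hy
          rw [← setLIntegral_const]
          refine le_trans ?_ (setLIntegral_le_lintegral (Ioi x0) _)
          refine setLIntegral_mono_ae' measurableSet_Ioi ?_
          filter_upwards with z hz
          have := hin y z hy hz
          calc ENNReal.ofReal (2/(1-c)) * ENNReal.ofReal (y^c - y * x0^(c-1)) = 2 * ENNReal.ofReal ((y^c - y * x0^(c-1))/(1-c)) := by
                rw [← ENNReal.ofReal_mul (by positivity)]
                have e2 : (2:ℝ≥0∞) = ENNReal.ofReal 2 := by simp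
                rw [e2, ← ENNReal.ofReal_mul (by positivity)]
                congr 1; ring
            _ = ENNReal.ofReal y * (2 + 0) * (∫⁻ x in Ioo y (y+z), (Ioo s x0).indicator (fun x => ENNReal.ofReal (x^(c-2))) x) := by
                rw [← this.1]; ring
            _ ≤ _ := by gcongr; exact zero_le
      _ ≤ _ := by
          rw [hm]; exact setLIntegral_le_lintegral _ _
  have hsplit : J ≤ (∫⁻ y in Ioo s x0, ENNReal.ofReal (y^c - y * x0^(c-1)) ∂(BM f)) + ENNReal.ofReal (x0^(c-1)) := by
    calc J ≤ ∫⁻ y in Ioo s x0, ENNReal.ofReal (y^c - y * x0^(c-1)) + ENNReal.ofReal y * ENNReal.ofReal (x0^(c-1)) ∂(BM f) := by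
          refine lintegral_mono fun y => ?_
          rw [← ENNReal.ofReal_mul' (by positivity)]
          refine le_trans (ENNReal.ofReal_le_ofReal ?_) (ENNReal.ofReal_add_le)
          linarith
      _ ≤ _ := by
          rw [lintegral_add_left (by fun_prop), lintegral_mul_const _ (by fun_prop)]
          gcongr
          calc _ ≤ (∫⁻ x, ENNReal.ofReal x ∂(BM f)) * ENNReal.ofReal (x0^(c-1)) := by
                gcongr; exact Measure.restrict_le_self
            _ = _ := by rw [H.mass, one_mul]
  have hfinal : ENNReal.ofReal κ * J ≤ J + ENNReal.ofReal (κ * x0^(c-1)) := by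
    calc ENNReal.ofReal κ * J ≤ ENNReal.ofReal κ * ((∫⁻ y in Ioo s x0, ENNReal.ofReal (y^c - y * x0^(c-1)) ∂(BM f)) + ENNReal.ofReal (x0^(c-1))) := by gcongr
      _ = ENNReal.ofReal κ * (∫⁻ y in Ioo s x0, ENNReal.ofReal (y^c - y * x0^(c-1)) ∂(BM f)) + ENNReal.ofReal (κ * x0^(c-1)) := by
          rw [mul_add, ENNReal.ofReal_mul (by linarith)]
      _ ≤ _ := by gcongr
  have hj : J = ENNReal.ofReal J.toReal := (ENNReal.ofReal_toReal hJfin).symm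
  have hj0 : 0 ≤ J.toReal := ENNReal.toReal_nonneg
  have hp : 0 < x0^(c-1) := by positivity
  rw [hj, ← ENNReal.ofReal_mul (by linarith), ← ENNReal.ofReal_add hj0 (by positivity), ENNReal.ofReal_le_ofReal_iff (by positivity)] at hfinal
  rw [hj]
  refine ENNReal.ofReal_le_ofReal ?_
  rw [le_div_iff₀ (by linarith)]
  linarith

lemma Prof.neg_mom (H : Prof α ε w f) {c x0 θ : ℝ} (hc : c < 0) (hx0 : 0 < x0) (hθ : 0 < θ)
    (hθc : 1 - c < 2 * θ) (hB : ENNReal.ofReal θ ≤ BM f (Ioi x0)) :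
    ∫⁻ x, ENNReal.ofReal (x^c) ∂(BM f) ≤ ENNReal.ofReal ((2*θ/(1-c)) * x0^(c-1)/(2*θ/(1-c) - 1)) + ENNReal.ofReal (x0^(c-1)) := by
  have h1 : ∫⁻ x in Iio x0, ENNReal.ofReal (x^c) ∂(BM f) ≤ ENNReal.ofReal ((2*θ/(1-c)) * x0^(c-1)/(2*θ/(1-c) - 1)) := by
    rw [← lintegral_indicator measurableSet_Iio]
    have ht : Tendsto (fun m : ℕ => ∫⁻ x, (Ioo (1/((m:ℝ)+1)) x0).indicator (fun x => ENNReal.ofReal (x^c)) x ∂(BM f)) atTop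
        (𝓝 (∫⁻ x, (Iio x0).indicator (fun x => ENNReal.ofReal (x^c)) x ∂(BM f))) := by
      refine lintegral_tendsto_of_tendsto_of_monotone (fun m => (Measurable.indicator (by fun_prop) measurableSet_Ioo).aemeasurable) ?_ ?_
      · filter_upwards with x m k hmk
        refine indicator_le_indicator_of_subset (Ioo_subset_Ioo_left ?_) (fun _ => zero_le) x
        exact one_div_le_one_div_of_le (by positivity) (by simpa using hmk)
      · filter_upwards [BM_pos (f := f)] with x hx
        refine tendsto_const_nhds.congr' ?_
        filter_upwards [tendsto_one_div_add_atTop_nhds_zero_nat.eventually_lt_const hx] with m hm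
        by_cases h : x < x0
        · simp [indicator, h, hm]; intro h'; exfalso; simp at hm; linarith
        · simp [indicator, h]
    refine le_of_tendsto' ht ?_
    intro m
    rw [lintegral_indicator measurableSet_Ioo]
    exact H.neg_s hc hx0 hθ hθc hB (by positivity)
  have h2 : ∫⁻ x in (Iio x0)ᶜ, ENNReal.ofReal (x^c) ∂(BM f) ≤ ENNReal.ofReal (x0^(c-1)) := by
    calc ∫⁻ x in (Iio x0)ᶜ, ENNReal.ofReal (x^c) ∂(BM f) ≤ ∫⁻ x in (Iio x0)ᶜ, ENNReal.ofReal x * ENNReal.ofReal (x0^(c-1)) ∂(BM f) := by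
          refine setLIntegral_mono (by fun_prop) ?_
          intro x hx
          have hx : x0 ≤ x := by simpa using hx
          have hx' : 0 < x := by linarith
          rw [← ENNReal.ofReal_mul (by positivity)]
          refine ENNReal.ofReal_le_ofReal ?_
          have : x^c = x * x^(c-1) := by rw [Real.rpow_sub_one hx'.ne']; field_simp
          rw [this]
          exact mul_le_mul_of_nonneg_left (Real.rpow_le_rpow_of_nonpos hx0 hx (by linarith)) hx'.le
      _ ≤ ∫⁻ x, ENNReal.ofReal x * ENNReal.ofReal (x0^(c-1)) ∂(BM f) := setLIntegral_le_lintegral _ _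
      _ = _ := by rw [lintegral_mul_const _ (by fun_prop), H.mass, one_mul]
  rw [← lintegral_add_compl _ (measurableSet_Iio (a := x0))]
  exact add_le_add h1 h2
end

section
variable {α : ℝ} {ε : ℕ → ℝ} {w : ℕ → ℝ → ℝ → ℝ≥0∞} {f : ℕ → ℝ → ℝ≥0∞}

lemma neg_unif (H : ∀ n, Prof α (ε n) (w n) (f n)) (hε : Tendsto ε atTop (𝓝 0)) {c : ℝ} (hc : c < 0) (hc1 : -1 < c) :
    ∃ C : ℝ, 0 ≤ C ∧ ∀ᶠ n in atTop, ∫⁻ x, ENNReal.ofReal (x^c) ∂(BM (f n)) ≤ ENNReal.ofReal C := by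
  set θ := (3-c)/4 with hθ
  set x0 := -Real.log ((1+θ)/2) with hx0
  have hθ0 : 0 < θ := by rw [hθ]; linarith
  have hθ1 : θ < 1 := by rw [hθ]; linarith
  have hx0p : 0 < x0 := by
    rw [hx0]; have := Real.log_neg (x := (1+θ)/2) (by linarith) (by linarith); linarith
  have hex : exp (-x0) = (1+θ)/2 := by rw [hx0, neg_neg, Real.exp_log (by linarith)]
  have h1c : 0 < 1 - c := by linarith
  have hθc : 1 - c < 2 * θ := by rw [hθ]; linarith
  have hκ1 : 1 < 2*θ/(1-c) := by rw [lt_div_iff₀ h1c]; linarith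
  have hA : 0 ≤ (2*θ/(1-c)) * x0^(c-1)/(2*θ/(1-c) - 1) := by
    apply div_nonneg
    · positivity
    · linarith
  refine ⟨(2*θ/(1-c)) * x0^(c-1)/(2*θ/(1-c) - 1) + x0^(c-1), by positivity, ?_⟩
  have ht := (tend_N H hε).sub (tend_B H hε hx0p)
  rw [hex] at ht
  filter_upwards [ht.eventually_const_lt (show θ < 1 - (1 - (1+θ)/2) by linarith)] with n hn
  have := (H n).fin
  rw [ENNReal.ofReal_add hA (by positivity)]
  refine (H n).neg_mom hc hx0p hθ0 hθc ?_
  have e : (BM (f n)).real (Ioi x0) = (BM (f n)).real univ - (BM (f n)).real (Iic x0) := by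
    rw [← compl_Iic, measureReal_compl measurableSet_Iic]
  rw [← e] at hn
  rw [← ENNReal.ofReal_toReal (measure_ne_top (BM (f n)) (Ioi x0))]
  exact ENNReal.ofReal_le_ofReal hn.le
end

lemma pow_exp_lt_top {c : ℝ} (hc : -1 < c) :
    ∫⁻ x in Ioi (0:ℝ), ENNReal.ofReal (exp (-x)) * ENNReal.ofReal (x^c) < ∞ := by
  have h := Real.GammaIntegral_convergent (s := c+1) (by linarith)
  have h2 := h.lintegral_lt_top
  refine lt_of_le_of_lt (le_of_eq ?_) h2
  refine lintegral_congr fun x => ?_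
  rw [← ENNReal.ofReal_mul (exp_pos _).le, add_sub_cancel_right]

lemma dd_le {f : ℝ → ℝ≥0∞} (hf : ∀ x, f x ≠ ∞) (x : ℝ) : dd f x ≤ f x + ENNReal.ofReal (exp (-x)) := by
  unfold dd
  calc ENNReal.ofReal |(f x).toReal - exp (-x)| ≤ ENNReal.ofReal ((f x).toReal + exp (-x)) := by
        refine ENNReal.ofReal_le_ofReal ?_
        rw [abs_le]
        have := ENNReal.toReal_nonneg (a := f x)
        have := exp_pos (-x)
        constructor <;> linarith
    _ = _ := by rw [ENNReal.ofReal_add ENNReal.toReal_nonneg (exp_pos _).le, ENNReal.ofReal_toReal (hf x)]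

lemma dd_meas {f : ℝ → ℝ≥0∞} (mf : Measurable f) : Measurable (dd f) := by
  unfold dd
  have := mf.ennreal_toReal
  refine ENNReal.measurable_ofReal.comp ?_
  exact (this.sub (by fun_prop)).abs

lemma dd_pow_le {f : ℝ → ℝ≥0∞} (mf : Measurable f) (hf : ∀ x, f x ≠ ∞) (c : ℝ) :
    ∫⁻ x in Ioi (0:ℝ), dd f x * ENNReal.ofReal (x^c) ≤ ∫⁻ x, ENNReal.ofReal (x^c) ∂(BM f)
      + ∫⁻ x in Ioi (0:ℝ), ENNReal.ofReal (exp (-x)) * ENNReal.ofReal (x^c) := by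
  have m : Measurable (fun x : ℝ => ENNReal.ofReal (x^c)) := by fun_prop
  rw [BM_lintegral mf m, ← lintegral_add_left (mf.fun_mul m)]
  refine lintegral_mono fun x => ?_
  simp only
  rw [← add_mul]
  gcongr
  exact dd_le hf x

lemma weight_le {a b c s R x : ℝ} (hca : c < a) (hs : 0 < s) (hs1 : s < 1) (hR : 1 < R) (hb : 0 < b) (hx : 0 < x) :
    ENNReal.ofReal (weight a b x) ≤ ENNReal.ofReal (s^(a-c)) * ENNReal.ofReal (x^c)
      + ENNReal.ofReal (R⁻¹) * ENNReal.ofReal (x^(b+1))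
      + ENNReal.ofReal ((s^(a-2) + 1 + R^b)) * (Ioc 0 R).indicator (fun x => ENNReal.ofReal (x^2)) x := by
  have hR0 : 0 < R := by linarith
  have r1 : 0 < s^(a-2) := by positivity
  have r2 : 0 < R^b := by positivity
  rcases le_or_gt x s with h | h
  · refine le_trans ?_ (le_trans le_self_add le_self_add)
    rw [← ENNReal.ofReal_mul (by positivity)]
    refine ENNReal.ofReal_le_ofReal ?_
    unfold weight
    rw [if_pos (by linarith)]
    have : x^a = x^(a-c) * x^c := by rw [← Real.rpow_add hx]; congr 1; ring
    rw [this]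
    exact mul_le_mul_of_nonneg_right (Real.rpow_le_rpow hx.le h (by linarith)) (by positivity)
  rcases le_or_gt x R with h' | h'
  · refine le_trans ?_ le_add_self
    rw [indicator_of_mem (show x ∈ Ioc 0 R from ⟨hx, h'⟩), ← ENNReal.ofReal_mul (by positivity)]
    refine ENNReal.ofReal_le_ofReal ?_
    unfold weight
    split_ifs with h1
    · have e : x^a = x^(a-2) * x^2 := by
        rw [← Real.rpow_natCast x 2, ← Real.rpow_add hx]; congr 1; push_cast; ring
      rw [e]
      refine mul_le_mul_of_nonneg_right ?_ (by positivity)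
      rcases le_or_gt (a-2) 0 with h2 | h2
      · have := Real.rpow_le_rpow_of_nonpos hs h.le h2
        linarith
      · have := Real.rpow_le_one hx.le h1 h2.le
        linarith
    · push Not at h1
      have := Real.rpow_le_rpow hx.le h' hb.le
      have h3 : 1 ≤ x^2 := by nlinarith
      nlinarith [mul_nonneg (show 0 ≤ s^(a-2) + 1 + R^b by positivity) (show 0 ≤ x^2 - 1 by linarith)]
  · refine le_trans ?_ (le_trans (le_add_self) le_self_add)
    rw [← ENNReal.ofReal_mul (by positivity)]
    refine ENNReal.ofReal_le_ofReal ?_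
    unfold weight
    rw [if_neg (by linarith), Real.rpow_add_one hx.ne']
    have h3 : 0 < x^b := by positivity
    rw [inv_mul_eq_div, le_div_iff₀ hR0]
    exact mul_le_mul_of_nonneg_left h'.le h3.le

section
variable {α : ℝ} {ε : ℕ → ℝ} {w : ℕ → ℝ → ℝ → ℝ≥0∞} {f : ℕ → ℝ → ℝ≥0∞}

lemma seq_small (H : ∀ n, Prof α (ε n) (w n) (f n)) (hf : ∀ n x, f n x ≠ ∞) (hε : Tendsto ε atTop (𝓝 0))
    {a b δ : ℝ} (ha : -1 < a) (hb : 0 < b) (hδ : 0 < δ) :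
    ∀ᶠ n in atTop, ∫⁻ x in Ioi (0:ℝ), dd (f n) x * ENNReal.ofReal (weight a b x) ≤ ENNReal.ofReal δ := by
  set c := (min a 0 - 1)/2 with hc
  have m0 : -1 < min a 0 := lt_min ha (by norm_num)
  have m1 := min_le_left a 0
  have m2 := min_le_right a 0
  have hca : c < a := by rw [hc]; linarith
  have hc0 : c < 0 := by rw [hc]; linarith
  have hc1 : -1 < c := by rw [hc]; linarith
  obtain ⟨C1, hC1, h1⟩ := neg_unif H hε hc0 hc1
  obtain ⟨C2, hC2, h2⟩ := Mo_bound (H 0).hα (t := b+1) (by linarith)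
  obtain ⟨D1, e1⟩ : ∃ D1 : ℝ, D1 = (∫⁻ x in Ioi (0:ℝ), ENNReal.ofReal (exp (-x)) * ENNReal.ofReal (x^c)).toReal := ⟨_, rfl⟩
  obtain ⟨D2, e2⟩ : ∃ D2 : ℝ, D2 = (∫⁻ x in Ioi (0:ℝ), ENNReal.ofReal (exp (-x)) * ENNReal.ofReal (x^(b+1))).toReal := ⟨_, rfl⟩
  have hD1 : 0 ≤ D1 := e1 ▸ ENNReal.toReal_nonneg
  have hD2 : 0 ≤ D2 := e2 ▸ ENNReal.toReal_nonneg
  have f1 : ∫⁻ x in Ioi (0:ℝ), ENNReal.ofReal (exp (-x)) * ENNReal.ofReal (x^c) = ENNReal.ofReal D1 := by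
    rw [e1, ENNReal.ofReal_toReal (pow_exp_lt_top hc1).ne]
  have f2 : ∫⁻ x in Ioi (0:ℝ), ENNReal.ofReal (exp (-x)) * ENNReal.ofReal (x^(b+1)) = ENNReal.ofReal D2 := by
    rw [e2, ENNReal.ofReal_toReal (pow_exp_lt_top (by linarith)).ne]
  -- choose s
  obtain ⟨s, hs0, hs1, hs⟩ : ∃ s : ℝ, 0 < s ∧ s < 1 ∧ s^(a-c) * (C1 + D1) ≤ δ/3 := by
    have t : Tendsto (fun s : ℝ => s^(a-c) * (C1+D1)) (𝓝[>] 0) (𝓝 0) := by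
      have := (Real.continuousAt_rpow_const 0 (a-c) (Or.inr (by linarith))).tendsto
      rw [Real.zero_rpow (by linarith)] at this
      have := (this.mono_left (nhdsWithin_le_nhds (s := Ioi 0))).mul_const (C1+D1)
      simpa using this
    have e := (t.eventually (Iic_mem_nhds (show (0:ℝ) < δ/3 by positivity))).and
      (Ioo_mem_nhdsGT (show (0:ℝ) < 1 by norm_num))
    obtain ⟨s, h, h'⟩ := e.exists
    exact ⟨s, h'.1, h'.2, h⟩
  obtain ⟨R, hR1, hR⟩ : ∃ R : ℝ, 1 < R ∧ R⁻¹ * (C2 + D2) ≤ δ/3 := by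
    refine ⟨2 + 3 * (C2+D2)/δ, ?_, ?_⟩
    · have : 0 ≤ 3 * (C2+D2)/δ := by positivity
      linarith
    · have h0 : 0 < 2 + 3 * (C2+D2)/δ := by positivity
      rw [inv_mul_eq_div, div_le_iff₀ h0]
      have : δ/3 * (2 + 3 * (C2+D2)/δ) = 2 * δ/3 + (C2+D2) := by field_simp
      rw [this]; linarith
  set Q := s^(a-2) + 1 + R^b with hQ
  have hR0 : 0 < R := by linarith
  have hQ0 : 0 < Q := by positivity
  have t3 := tend_mid H hf hε R
  have t4 : Tendsto (fun n => ENNReal.ofReal Q * ∫⁻ x in Ioc 0 R, ENNReal.ofReal (x^2) * dd (f n) x) atTop (𝓝 0) := by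
    have := ENNReal.Tendsto.const_mul t3 (a := ENNReal.ofReal Q) (Or.inr ENNReal.ofReal_ne_top)
    simpa using this
  have e4 := t4.eventually (Iic_mem_nhds (show (0:ℝ≥0∞) < ENNReal.ofReal (δ/3) by simpa using hδ))
  filter_upwards [h1, e4] with n g1 g4
  have g1' := (dd_pow_le (H n).mf (hf n) c).trans (add_le_add g1 f1.le)
  have g2' := (dd_pow_le (H n).mf (hf n) (b+1)).trans (add_le_add (h2 _ _ _ (H n)) f2.le)
  have md := dd_meas (H n).mf
  have g4' : ∫⁻ x in Ioi (0:ℝ), dd (f n) x * (Ioc 0 R).indicator (fun x => ENNReal.ofReal (x^2)) x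
      = ∫⁻ x in Ioc 0 R, ENNReal.ofReal (x^2) * dd (f n) x := by
    rw [← lintegral_indicator measurableSet_Ioi, ← lintegral_indicator measurableSet_Ioc]
    refine lintegral_congr fun x => ?_
    by_cases hx : x ∈ Ioc 0 R
    · have : x ∈ Ioi (0:ℝ) := hx.1
      rw [indicator_of_mem this, indicator_of_mem hx, indicator_of_mem hx, mul_comm]
    · by_cases h : x ∈ Ioi (0:ℝ) <;> simp [hx, h]
  calc ∫⁻ x in Ioi (0:ℝ), dd (f n) x * ENNReal.ofReal (weight a b x)
      ≤ ∫⁻ x in Ioi (0:ℝ), ENNReal.ofReal (s^(a-c)) * (dd (f n) x * ENNReal.ofReal (x^c))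
        + ENNReal.ofReal (R⁻¹) * (dd (f n) x * ENNReal.ofReal (x^(b+1)))
        + ENNReal.ofReal Q * (dd (f n) x * (Ioc 0 R).indicator (fun x => ENNReal.ofReal (x^2)) x) := by
        refine setLIntegral_mono_ae' measurableSet_Ioi (Eventually.of_forall fun x hx => ?_)
        refine (mul_le_mul_right (weight_le hca hs0 hs1 hR1 hb hx) _).trans (le_of_eq ?_)
        rw [← hQ]; ring
    _ = ENNReal.ofReal (s^(a-c)) * (∫⁻ x in Ioi (0:ℝ), dd (f n) x * ENNReal.ofReal (x^c))
        + ENNReal.ofReal (R⁻¹) * (∫⁻ x in Ioi (0:ℝ), dd (f n) x * ENNReal.ofReal (x^(b+1)))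
        + ENNReal.ofReal Q * (∫⁻ x in Ioc 0 R, ENNReal.ofReal (x^2) * dd (f n) x) := by
        have i1 : Measurable fun x : ℝ => dd (f n) x * ENNReal.ofReal (x^c) := md.mul (by fun_prop)
        have i2 : Measurable fun x : ℝ => dd (f n) x * ENNReal.ofReal (x^(b+1)) := md.mul (by fun_prop)
        have i3 : Measurable fun x : ℝ => dd (f n) x * (Ioc 0 R).indicator (fun x => ENNReal.ofReal (x^2)) x :=
          md.mul ((by fun_prop : Measurable (fun x : ℝ => ENNReal.ofReal (x^2))).indicator measurableSet_Ioc)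
        rw [lintegral_add_left ((i1.const_mul _).fun_add (i2.const_mul _)), lintegral_add_left (i1.const_mul _),
          lintegral_const_mul _ i1, lintegral_const_mul _ i2, lintegral_const_mul _ i3, g4']
    _ ≤ ENNReal.ofReal (δ/3) + ENNReal.ofReal (δ/3) + ENNReal.ofReal (δ/3) := by
        refine add_le_add (add_le_add ?_ ?_) g4
        · refine (mul_le_mul_right g1' _).trans ?_
          rw [← ENNReal.ofReal_add hC1 hD1, ← ENNReal.ofReal_mul (by positivity)]
          exact ENNReal.ofReal_le_ofReal hs
        · refine (mul_le_mul_right g2' _).trans ?_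
          rw [← ENNReal.ofReal_add hC2 hD2, ← ENNReal.ofReal_mul (by positivity)]
          exact ENNReal.ofReal_le_ofReal hR
    _ = ENNReal.ofReal δ := by
        rw [← ENNReal.ofReal_add (by positivity) (by positivity), ← ENNReal.ofReal_add (by positivity) (by positivity)]
        congr 1; ring
end

lemma eps_small {α : ℝ} {a b δ : ℝ} (ha : -1 < a) (hb : 0 < b) (hδ : 0 < δ) :
    ∃ e : ℝ, 0 < e ∧ e ≤ 1 ∧ ∀ ε w f, ε ≤ e → Prof α ε w f → (∀ x, f x ≠ ∞) →
      ∫⁻ x in Ioi (0:ℝ), dd f x * ENNReal.ofReal (weight a b x) ≤ ENNReal.ofReal δ := by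
  by_contra hcon
  push Not at hcon
  have hn : ∀ n : ℕ, ∃ ε w f, ε ≤ 1/((n:ℝ)+1) ∧ Prof α ε w f ∧ (∀ x, f x ≠ ∞) ∧
      ENNReal.ofReal δ < ∫⁻ x in Ioi (0:ℝ), dd f x * ENNReal.ofReal (weight a b x) := by
    intro n
    exact hcon (1/((n:ℝ)+1)) (by positivity)
      (by rw [div_le_one (by positivity)]; linarith [Nat.cast_nonneg (α := ℝ) n])
  choose ε w f h1 h2 h3 h4 using hn
  have hε : Tendsto ε atTop (𝓝 0) :=
    squeeze_zero (fun n => (h2 n).hε.le) h1 tendsto_one_div_add_atTop_nhds_zero_nat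
  obtain ⟨n, hn⟩ := (seq_small h2 h3 hε ha hb hδ).exists
  exact absurd hn (not_le.2 (h4 n))

lemma weight_nonneg {a b x : ℝ} (hx : 0 < x) : 0 ≤ weight a b x := by
  unfold weight; split_ifs <;> positivity

lemma bochner_le {g : ℝ → ℝ} {δ : ℝ} (hδ : 0 ≤ δ) (hg : ∀ x, 0 < x → 0 ≤ g x)
    (h : ∫⁻ x in Ioi (0:ℝ), ENNReal.ofReal (g x) ≤ ENNReal.ofReal δ) : ∫ x in Ioi (0:ℝ), g x ≤ δ := by
  by_cases hm : AEStronglyMeasurable g (volume.restrict (Ioi (0:ℝ)))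
  · rw [integral_eq_lintegral_of_nonneg_ae _ hm]
    · exact ENNReal.toReal_le_of_le_ofReal hδ h
    · filter_upwards [ae_restrict_mem measurableSet_Ioi] with x hx using hg x hx
  · rw [integral_non_aestronglyMeasurable hm]; exact hδ

theorem stmt0 (α : ℝ) (hα : α ∈ Ioo (0:ℝ) 1) (W : ℝ → ℝ → ℝ) (hW : GoodW α W)
    (a b δ : ℝ) (ha : -1 < a) (hb : 0 < b) (hδ : 0 < δ) :
    ∃ εstar > 0, ∀ ε : ℝ, 0 < ε → ε ≤ εstar →
      (∀ φ : ℝ → ℝ, IsProfile (Kern ε W) φ → IsNormalised φ →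
        ∫ x in Ioi (0:ℝ), |φ x - exp (-x)| * weight a b x ≤ δ) ∧
      (∀ φ₁ φ₂ : ℝ → ℝ, IsProfile (Kern ε W) φ₁ → IsNormalised φ₁ →
        IsProfile (Kern ε W) φ₂ → IsNormalised φ₂ →
        ∫ x in Ioi (0:ℝ), |φ₁ x - φ₂ x| * weight a b x ≤ 2 * δ) := by
  obtain ⟨e, he, he1, hmain⟩ := eps_small (α := α) ha hb hδ
  refine ⟨e, he, fun ε hε hεe => ⟨?_, ?_⟩⟩
  · intro φ hφ hn
    obtain ⟨w, f, hP, hf, hfe⟩ := exists_prof hα hW hε (hεe.trans he1) hφ hn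
    refine bochner_le hδ.le (fun x hx => mul_nonneg (abs_nonneg _) (weight_nonneg hx)) ?_
    refine le_trans (le_of_eq ?_) (hmain ε w f hεe hP hf)
    refine lintegral_congr_ae ?_
    filter_upwards [hfe] with x hx
    rw [hx, ENNReal.ofReal_mul (abs_nonneg _)]; rfl
  · intro φ₁ φ₂ hφ₁ hn₁ hφ₂ hn₂
    obtain ⟨w₁, f₁, hP₁, hf₁, hfe₁⟩ := exists_prof hα hW hε (hεe.trans he1) hφ₁ hn₁
    obtain ⟨w₂, f₂, hP₂, hf₂, hfe₂⟩ := exists_prof hα hW hε (hεe.trans he1) hφ₂ hn₂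
    refine bochner_le (by linarith) (fun x hx => mul_nonneg (abs_nonneg _) (weight_nonneg hx)) ?_
    have mw : Measurable (fun x : ℝ => ENNReal.ofReal (weight a b x)) := by
      unfold weight
      exact ENNReal.measurable_ofReal.comp
        (Measurable.ite measurableSet_Iic (by fun_prop) (by fun_prop))
    calc ∫⁻ x in Ioi (0:ℝ), ENNReal.ofReal (|φ₁ x - φ₂ x| * weight a b x)
        ≤ ∫⁻ x in Ioi (0:ℝ), dd f₁ x * ENNReal.ofReal (weight a b x) + dd f₂ x * ENNReal.ofReal (weight a b x) := by
          refine lintegral_mono_ae ?_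
          filter_upwards [hfe₁, hfe₂] with x h1 h2
          rw [h1, h2, ENNReal.ofReal_mul (abs_nonneg _), ← add_mul]
          refine mul_le_mul_left ?_ _
          unfold dd
          rw [← ENNReal.ofReal_add (abs_nonneg _) (abs_nonneg _)]
          refine ENNReal.ofReal_le_ofReal ?_
          rw [abs_sub_comm ((f₂ x).toReal)]
          exact abs_sub_le _ _ _
      _ = (∫⁻ x in Ioi (0:ℝ), dd f₁ x * ENNReal.ofReal (weight a b x)) + ∫⁻ x in Ioi (0:ℝ), dd f₂ x * ENNReal.ofReal (weight a b x) :=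
          lintegral_add_left ((dd_meas hP₁.mf).mul mw) _
      _ ≤ ENNReal.ofReal δ + ENNReal.ofReal δ :=
          add_le_add (hmain ε w₁ f₁ hεe hP₁ hf₁) (hmain ε w₂ f₂ hεe hP₂ hf₂)
      _ = ENNReal.ofReal (2 * δ) := by rw [← ENNReal.ofReal_add hδ.le hδ.le]; congr 1; ring
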